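/- arXiv:1710.08353 — 5 statements merged into one kernel-verified Lean document; each statement's English description precedes it below -/
import Mathlib

section
/- Let k ≥ 2 be a natural number and let S be a k-automatic subset of ℕ. Then S forms an asymptotic additive basis for ℕ (i.e., there exists j such that every sufficiently large natural number is a sum of at most j elements of S) if and only if both of the following hold: (1) S is not sparse; (2) gcd(S) = 1. -/
/-- `n` can be written as a sum of at least one and at most `N` elements of `S`
(repetitions allowed). -/
def SumOfAtMost (S : Set ℕ) (N n : ℕ) : Prop :=
  ∃ l : List ℕ, l ≠ [] ∧ l.length ≤ N ∧ (∀ x ∈ l, x ∈ S) ∧ l.sum = n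

/-- `π_S(x) = #{n ≤ x : n ∈ S}`. -/
noncomputable def piCount (S : Set ℕ) (x : ℕ) : ℕ :=
  Set.ncard {n | n ∈ S ∧ n ≤ x}

/-- `S` is sparse if `π_S(x) = O((log x)^d)` for some natural number `d`. -/
def IsSparse (S : Set ℕ) : Prop :=
  ∃ d : ℕ, ∃ C : ℝ, 0 < C ∧ ∃ x0 : ℕ, ∀ x : ℕ, x0 ≤ x →
    (piCount S x : ℝ) ≤ C * (Real.log x) ^ d

/-- `S ⊆ ℕ` is `k`-automatic: some DFA over the alphabet `{0, …, k-1}` accepts exactly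
the base-`k` expansions (least-significant digit first, without leading zeros)
of the elements of `S`. -/
def IsKAutomatic (k : ℕ) (S : Set ℕ) : Prop :=
  ∃ (m : ℕ) (M : DFA (Fin k) (Fin m)),
    ∀ w : List (Fin k), w ∈ M.accepts ↔ ∃ s ∈ S, w.map Fin.val = Nat.digits k s

/-!
If `S` has `p` elements up to `x`, then at most `(p + 1) ^ j` numbers up to `x` are sums of at most
`j` elements of `S`, so a basis is not sparse; its gcd is `1` because it represents consecutive
numbers.

For the converse, suppose no state on an accepting path carries two distinct loops of equal length.
Then an accepted word is determined by the time of the last visit to each state and the letter read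
there, so `S` is sparse. Otherwise `S` contains all numbers with expansions in `u{x,y}*v`, where
`x ≠ y` have equal length: translates of dilated Hilbert cubes
`{c * ∑ i < n, ε i * K ^ i | ε i ∈ {0, 1}}` with `K = k ^ |x|` and `c` independent of `n`. Sums of
`K - 1` elements of such a cube form a progression of difference `c` and length `K ^ n`, starting at
`O(K ^ n)`. For a suitable constant `T`, adding up boundedly many copies of it covers the scale from
`T * K ^ n` to `T * K ^ (n + 1)`, so the sums of boundedly many elements of `S` eventually have gaps
at most `c`. Since the gcd is `1`, all large numbers are sums of elements of `S`, and finitely many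
of these sums fill the gaps.
-/

section

open Filter Asymptotics
open scoped Pointwise

namespace SumOfAtMost

variable {S : Set ℕ} {a b x y : ℕ}

theorem add (hx : SumOfAtMost S a x) (hy : SumOfAtMost S b y) :
    SumOfAtMost S (a + b) (x + y) := by
  obtain ⟨l, hl, hla, hlS, rfl⟩ := hx
  obtain ⟨l', -, hlb, hlS', rfl⟩ := hy
  refine ⟨l ++ l', List.append_ne_nil_of_left_ne_nil hl l', ?_, ?_, List.sum_append⟩
  · simpa only [List.length_append] using Nat.add_le_add hla hlb
  · simpa only [List.forall_mem_append] using ⟨hlS, hlS'⟩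

theorem mono (hx : SumOfAtMost S a x) (hab : a ≤ b) : SumOfAtMost S b x :=
  let ⟨l, hl, hla, hlS, hsum⟩ := hx
  ⟨l, hl, hla.trans hab, hlS, hsum⟩

theorem dvd {d : ℕ} (hd : ∀ n ∈ S, d ∣ n) (hx : SumOfAtMost S a x) : d ∣ x := by
  obtain ⟨l, -, -, hlS, rfl⟩ := hx
  exact List.dvd_sum fun y hy => hd y (hlS y hy)

theorem finset_sum {ι : Type*} {t : Finset ι} (ht : t.Nonempty) {f : ι → ℕ}
    (hf : ∀ i ∈ t, f i ∈ S) : SumOfAtMost S t.card (∑ i ∈ t, f i) := by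
  refine ⟨t.toList.map f, ?_, ?_, ?_, Finset.sum_map_toList t f⟩
  · simpa using ht.ne_empty
  · rw [List.length_map, Finset.length_toList]
  · simpa using hf

theorem exists_of_mem_closure (hx : x ∈ AddSubmonoid.closure S) (hx0 : x ≠ 0) :
    ∃ j, SumOfAtMost S j x := by
  obtain ⟨l, hlS, rfl⟩ := AddSubmonoid.exists_list_of_mem_closure hx
  exact ⟨l.length, l, fun hl => hx0 (by rw [hl, List.sum_nil]), le_rfl, hlS, rfl⟩

end SumOfAtMost

theorem eq_one_of_dvd_of_eventually_sumOfAtMost {S : Set ℕ} {d j : ℕ} (hd : ∀ n ∈ S, d ∣ n)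
    (h : ∀ᶠ n in atTop, SumOfAtMost S j n) : d = 1 := by
  obtain ⟨M, hM⟩ := eventually_atTop.1 h
  have hdvd : ∀ n ≥ M, d ∣ n := fun n hn => (hM n hn).dvd hd
  exact Nat.dvd_one.1 ((Nat.dvd_add_right (hdvd M le_rfl)).1 (hdvd (M + 1) M.le_succ))

theorem isSparse_iff_isBigO {S : Set ℕ} :
    IsSparse S ↔ ∃ d : ℕ, (fun x : ℕ => (piCount S x : ℝ)) =O[atTop] fun x => Real.log x ^ d := by
  refine exists_congr fun d => ?_
  simp only [isBigO_iff', eventually_atTop, Real.norm_eq_abs, Nat.abs_cast,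
    abs_of_nonneg (pow_nonneg (Real.log_natCast_nonneg _) d)]

theorem one_isBigO_log_pow (d : ℕ) :
    (fun _ : ℕ => (1 : ℝ)) =O[atTop] fun x : ℕ => Real.log x ^ d := by
  simpa using
    ((Real.isLittleO_const_log_atTop (c := 1)).isBigO.comp_tendsto
      tendsto_natCast_atTop_atTop).pow d

theorem list_sum_mem_nsmul {A : Type*} [AddMonoid A] [DecidableEq A] {s : Finset A} :
    ∀ {l : List A}, (∀ a ∈ l, a ∈ s) → l.sum ∈ l.length • s
  | [], _ => by simp
  | a :: l, hl => by
    rw [List.sum_cons, List.length_cons, succ_nsmul']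
    rw [List.forall_mem_cons] at hl
    exact Finset.add_mem_add hl.1 (list_sum_mem_nsmul hl.2)

theorem piCount_sumOfAtMost_le (S : Set ℕ) (j x : ℕ) :
    piCount {n | SumOfAtMost S j n} x ≤ (piCount S x + 1) ^ j := by
  have hfin : {n | n ∈ S ∧ n ≤ x}.Finite := (Set.finite_Iic x).subset fun n hn => hn.2
  set A : Finset ℕ := insert 0 hfin.toFinset
  have hsub : {n | SumOfAtMost S j n ∧ n ≤ x} ⊆ (j • A : Finset ℕ) := by
    rintro _ ⟨⟨l, -, hlj, hlS, rfl⟩, hlx⟩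
    have hlA : ∀ y ∈ l, y ∈ A := fun y hy => Finset.mem_insert_of_mem <|
      hfin.mem_toFinset.2 ⟨hlS y hy, (List.le_sum_of_mem hy).trans hlx⟩
    exact Finset.nsmul_subset_nsmul_right (Finset.mem_insert_self 0 _) hlj
      (list_sum_mem_nsmul hlA)
  calc piCount {n | SumOfAtMost S j n} x
      ≤ (j • A).card :=
        (Set.ncard_le_ncard hsub (Finset.finite_toSet _)).trans_eq (Set.ncard_coe_finset _)
    _ ≤ A.card ^ j := Finset.card_nsmul_le
    _ ≤ (piCount S x + 1) ^ j := by
        gcongr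
        rw [piCount, Set.ncard_eq_toFinset_card _ hfin]
        exact Finset.card_insert_le _ _

theorem IsSparse.sumOfAtMost {S : Set ℕ} (hS : IsSparse S) (j : ℕ) :
    IsSparse {n | SumOfAtMost S j n} := by
  obtain ⟨d, hd⟩ := isSparse_iff_isBigO.1 hS
  refine isSparse_iff_isBigO.2 ⟨d * j, ?_⟩
  have hle (x : ℕ) : (piCount {n | SumOfAtMost S j n} x : ℝ) ≤ ((piCount S x : ℝ) + 1) ^ j := by
    exact_mod_cast piCount_sumOfAtMost_le S j x
  simp only [pow_mul]
  exact (IsBigO.of_norm_le fun x => by simpa using hle x).trans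
    ((hd.add (one_isBigO_log_pow d)).pow j)

theorem not_isSparse_of_eventually_mem {A : Set ℕ} (hA : ∀ᶠ n in atTop, n ∈ A) :
    ¬ IsSparse A := by
  rw [isSparse_iff_isBigO]
  rintro ⟨d, hd⟩
  obtain ⟨M, hM⟩ := eventually_atTop.1 hA
  have hcount (x : ℕ) : x ≤ piCount A x + M := by
    have hsub : Set.Icc M x ⊆ {n | n ∈ A ∧ n ≤ x} := fun n hn => ⟨hM n hn.1, hn.2⟩
    have := Set.ncard_le_ncard hsub ((Set.finite_Iic x).subset fun n hn => hn.2)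
    rw [← Finset.coe_Icc, Set.ncard_coe_finset, Nat.card_Icc] at this
    rw [piCount]
    omega
  have hid : (fun x : ℕ => (x : ℝ)) =O[atTop] fun x : ℕ => Real.log x ^ d := by
    have hle (x : ℕ) : (x : ℝ) ≤ (piCount A x : ℝ) + M * 1 := by
      rw [mul_one]
      exact_mod_cast hcount x
    exact (IsBigO.of_norm_le fun x => by simpa using hle x).trans
      (hd.add ((one_isBigO_log_pow d).const_mul_left _))
  have hlog : (fun x : ℕ => Real.log x ^ d) =o[atTop] fun x : ℕ => (x : ℝ) :=
    Real.isLittleO_pow_log_id_atTop.comp_tendsto tendsto_natCast_atTop_atTop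
  have hne : ∃ᶠ x : ℕ in atTop, (x : ℝ) ≠ 0 :=
    (eventually_ne_atTop 0).frequently.mono fun x hx => Nat.cast_ne_zero.2 hx
  exact hid.not_isLittleO hne hlog

section DFA

variable {α σ : Type*} {M : DFA α σ}

/-- The concatenation of copies of `x` and `y` prescribed by `bs`, where `true` selects `y`. -/
def choiceWord (x y : List α) (bs : List Bool) : List α :=
  (bs.map fun b => cond b y x).flatten

theorem choiceWord_cons (x y : List α) (b : Bool) (bs : List Bool) :
    choiceWord x y (b :: bs) = cond b y x ++ choiceWord x y bs :=
  rfl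

theorem length_choiceWord {x y : List α} (hlen : x.length = y.length) (bs : List Bool) :
    (choiceWord x y bs).length = x.length * bs.length := by
  induction bs with
  | nil => rfl
  | cons b bs ih =>
    rw [choiceWord_cons, List.length_append, ih, List.length_cons]
    cases b <;> simp only [cond, ← hlen] <;> ring

/-- A fork of an automaton: after reading `u` it sits in a state with two distinct loops `x` and
`y` of equal length, and some continuation `v` of `u` is accepted. The accepted language then
contains `u{x,y}*v`, hence has exponential growth. -/
def HasFork (M : DFA α σ) : Prop :=
  ∃ u x y v : List α, x ≠ y ∧ x.length = y.length ∧
    M.eval (u ++ x) = M.eval u ∧ M.eval (u ++ y) = M.eval u ∧ u ++ v ∈ M.accepts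

theorem append_choiceWord_append_mem_accepts {u x y v : List α}
    (hx : M.eval (u ++ x) = M.eval u) (hy : M.eval (u ++ y) = M.eval u)
    (hv : u ++ v ∈ M.accepts) (bs : List Bool) : u ++ choiceWord x y bs ++ v ∈ M.accepts := by
  simp only [DFA.mem_accepts, DFA.eval, DFA.evalFrom_of_append] at hx hy hv ⊢
  suffices hloop : M.evalFrom (M.evalFrom M.start u) (choiceWord x y bs) =
      M.evalFrom M.start u by rwa [hloop]
  induction bs with
  | nil => rfl
  | cons b bs ih => cases b <;> simpa only [choiceWord_cons, cond, DFA.evalFrom_of_append, hx, hy]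

section LastVisit

variable (M) [DecidableEq σ]

/-- The last time `t ≤ w.length` at which the automaton is in state `q` while reading `w`, and `0`
if `q` is never visited. -/
def lastVisit (w : List α) (q : σ) : ℕ :=
  Nat.findGreatest (fun t => M.eval (w.take t) = q) w.length

theorem lastVisit_le_length (w : List α) (q : σ) : lastVisit M w q ≤ w.length :=
  Nat.findGreatest_le _

theorem le_lastVisit_eval_take {w : List α} {t : ℕ} (ht : t ≤ w.length) :
    t ≤ lastVisit M w (M.eval (w.take t)) :=
  Nat.le_findGreatest ht rfl

theorem eval_take_lastVisit_eval_take {w : List α} {t : ℕ} (ht : t ≤ w.length) :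
    M.eval (w.take (lastVisit M w (M.eval (w.take t)))) = M.eval (w.take t) :=
  Nat.findGreatest_spec (P := fun s => M.eval (w.take s) = M.eval (w.take t)) ht rfl

/-- For each state, the time of its last visit and the letter read there (`none` at the end of
the word). For an automaton without fork this determines an accepted word, so there are only
polynomially many of each length. -/
def exitProfile (w : List α) (q : σ) : ℕ × Option α :=
  (lastVisit M w q, w[lastVisit M w q]?)

variable {M}

/- From the state reached at time `t`, both words make a loop that ends at the common last visit of
that state; without a fork the two loops coincide, and in particular so do the next letters. -/
theorem getElem?_eq_of_exitProfile_eq (hM : ¬ HasFork M) {w w' : List α} (hw : w ∈ M.accepts)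
    (h : exitProfile M w = exitProfile M w') {t : ℕ} (htake : w.take t = w'.take t)
    (ht : t ≤ w.length) (ht' : t ≤ w'.length) : w[t]? = w'[t]? := by
  have hloop := eval_take_lastVisit_eval_take M ht
  have hloop' := eval_take_lastVisit_eval_take M ht'
  have hle := le_lastVisit_eval_take M ht
  have hlen := lastVisit_le_length M w (M.eval (w.take t))
  have hlen' := lastVisit_le_length M w' (M.eval (w'.take t))
  obtain ⟨htime, hletter⟩ := Prod.ext_iff.1 (congrFun h (M.eval (w.take t)))
  simp only [exitProfile] at htime hletter
  rw [← htake, ← htime] at hloop' hlen'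
  rw [← htime] at hletter
  obtain ⟨s, hs⟩ := Nat.exists_eq_add_of_le hle
  rw [hs] at hloop hloop' hlen hlen' hletter
  rcases s.eq_zero_or_pos with rfl | hspos
  · exact hletter
  have hsame : (w.drop t).take s = (w'.drop t).take s := by
    by_contra hne
    refine hM ⟨w.take t, _, _, w.drop t, hne, ?_, ?_, ?_, ?_⟩
    · simp only [List.length_take, List.length_drop]
      omega
    · rwa [← List.take_add]
    · rwa [htake, ← List.take_add, ← htake]
    · rwa [List.take_append_drop]
  have hfirst : ((w.drop t).take s)[0]? = ((w'.drop t).take s)[0]? := by rw [hsame]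
  simpa only [List.getElem?_take_of_lt hspos, List.getElem?_drop, add_zero] using hfirst

theorem injOn_exitProfile (hM : ¬ HasFork M) : Set.InjOn (exitProfile M) M.accepts := by
  intro w hw w' _ h
  have htake (t : ℕ) : w.take t = w'.take t := by
    induction t with
    | zero => rfl
    | succ t ih =>
      rw [List.take_add_one, List.take_add_one, ih]
      have hlen := congrArg List.length ih
      simp only [List.length_take] at hlen
      by_cases ht : t ≤ w.length ∧ t ≤ w'.length
      · rw [getElem?_eq_of_exitProfile_eq hM hw h ih ht.1 ht.2]
      · rw [List.getElem?_eq_none (by omega), List.getElem?_eq_none (by omega)]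
  have hmax := htake (max w.length w'.length)
  rwa [List.take_of_length_le (le_max_left _ _), List.take_of_length_le (le_max_right _ _)] at hmax

end LastVisit

theorem ncard_accepts_length_le [Fintype α] [Fintype σ] (hM : ¬ HasFork M) (n : ℕ) :
    {w ∈ M.accepts | w.length ≤ n}.ncard ≤
      ((n + 1) * (Fintype.card α + 1)) ^ Fintype.card σ := by
  classical
  set profiles : Finset (σ → ℕ × Option α) :=
    Fintype.piFinset fun _ => Finset.range (n + 1) ×ˢ Finset.univ with hprofiles
  have hmem : ∀ w ∈ {w ∈ M.accepts | w.length ≤ n}, exitProfile M w ∈ (profiles : Set _) := by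
    intro w hw
    simp only [hprofiles, Finset.mem_coe, Fintype.mem_piFinset, Finset.mem_product,
      Finset.mem_range, Finset.mem_univ, and_true]
    exact fun q => Nat.lt_succ_of_le ((lastVisit_le_length M w q).trans hw.2)
  have hinj : Set.InjOn (exitProfile M) {w ∈ M.accepts | w.length ≤ n} :=
    (injOn_exitProfile hM).mono fun w hw => hw.1
  refine (Set.ncard_le_ncard_of_injOn _ hmem hinj profiles.finite_toSet).trans_eq ?_
  rw [Set.ncard_coe_finset]
  simp [hprofiles]

end DFA

section Recognition

variable {k : ℕ}

/-- The number with base-`k` expansion `w`, least significant digit first. -/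
def wordValue (w : List (Fin k)) : ℕ :=
  Nat.ofDigits k (w.map Fin.val)

theorem wordValue_append (w w' : List (Fin k)) :
    wordValue (w ++ w') = wordValue w + k ^ w.length * wordValue w' := by
  rw [wordValue, List.map_append, Nat.ofDigits_append, List.length_map, wordValue, wordValue]

theorem wordValue_lt (hk : 2 ≤ k) (w : List (Fin k)) : wordValue w < k ^ w.length := by
  simpa only [wordValue, List.length_map] using
    Nat.ofDigits_lt_base_pow_length (l := w.map Fin.val) hk (by simp)

theorem eq_of_wordValue_eq (hk : 2 ≤ k) {w w' : List (Fin k)} (hlen : w.length = w'.length)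
    (h : wordValue w = wordValue w') : w = w' :=
  List.map_injective_iff.2 Fin.val_injective <|
    Nat.ofDigits_inj_of_len_eq hk (by simpa using hlen) (by simp) (by simp) h

theorem wordValue_choiceWord {x y : List (Fin k)} (hlen : x.length = y.length)
    (hxy : wordValue x ≤ wordValue y) (bs : List Bool) :
    wordValue (choiceWord x y bs) =
      Nat.ofDigits (k ^ x.length) (List.replicate bs.length (wordValue x)) +
        (wordValue y - wordValue x) * Nat.ofDigits (k ^ x.length) (bs.map Bool.toNat) := by
  obtain ⟨D, hD⟩ := Nat.exists_eq_add_of_le hxy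
  rw [hD, Nat.add_sub_cancel_left]
  induction bs with
  | nil => rfl
  | cons b bs ih =>
    rw [choiceWord_cons, wordValue_append, ih, List.length_cons, List.replicate_succ,
      Nat.ofDigits_cons, List.map_cons, Nat.ofDigits_cons]
    cases b <;> simp only [cond, Bool.toNat, ← hlen, hD] <;> ring

theorem exists_map_val_eq_digits (hk : 2 ≤ k) (n : ℕ) :
    ∃ w : List (Fin k), w.map Fin.val = Nat.digits k n := by
  rw [← Set.mem_range, Set.range_list_map]
  exact fun d hd => ⟨⟨d, Nat.digits_lt_base hk hd⟩, rfl⟩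

variable {σ : Type*} {M : DFA (Fin k) σ} {S : Set ℕ}

/-- The automaton `M` accepts exactly the base-`k` expansions of the elements of `S`, as in
`IsKAutomatic` but with an arbitrary type of states. -/
def Recognizes (M : DFA (Fin k) σ) (S : Set ℕ) : Prop :=
  ∀ w : List (Fin k), w ∈ M.accepts ↔ ∃ s ∈ S, w.map Fin.val = Nat.digits k s

namespace Recognizes

theorem wordValue_mem (hM : Recognizes M S) {w : List (Fin k)} (hw : w ∈ M.accepts) :
    wordValue w ∈ S := by
  obtain ⟨s, hs, h⟩ := (hM w).1 hw
  rwa [wordValue, h, Nat.ofDigits_digits]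

theorem piCount_le_ncard (hM : Recognizes M S) (hk : 2 ≤ k) (x : ℕ) :
    piCount S x ≤ {w ∈ M.accepts | w.length ≤ Nat.log k x + 1}.ncard := by
  set W := {w ∈ M.accepts | w.length ≤ Nat.log k x + 1}
  have hW : W.Finite := (List.finite_length_le (Fin k) _).subset fun w hw => hw.2
  have hsub : {n | n ∈ S ∧ n ≤ x} ⊆ wordValue '' W := by
    rintro n ⟨hnS, hnx⟩
    obtain ⟨w, hw⟩ := exists_map_val_eq_digits hk n
    refine ⟨w, ⟨(hM w).2 ⟨n, hnS, hw⟩, ?_⟩, by rw [wordValue, hw, Nat.ofDigits_digits]⟩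
    rw [← List.length_map, hw, Nat.digits_length_le_iff hk]
    exact hnx.trans_lt (Nat.lt_pow_succ_log_self hk x)
  exact (Set.ncard_le_ncard hsub (hW.image _)).trans (Set.ncard_image_le hW)

theorem isSparse_of_not_hasFork [Finite σ] (hM : Recognizes M S) (hk : 2 ≤ k)
    (hfork : ¬ HasFork M) : IsSparse S := by
  have := Fintype.ofFinite σ
  have hcount (x : ℕ) : (piCount S x : ℝ) ≤
      (((Nat.log k x : ℝ) + 1 + 1) * (k + 1)) ^ Fintype.card σ := by
    have h := (hM.piCount_le_ncard hk x).trans (ncard_accepts_length_le hfork _)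
    rw [Fintype.card_fin] at h
    exact_mod_cast h
  have hone : (fun _ : ℕ => (1 : ℝ)) =O[atTop] fun x : ℕ => Real.log x := by
    simpa only [pow_one] using one_isBigO_log_pow 1
  have hnatLog : (fun x : ℕ => (Nat.log k x : ℝ)) =O[atTop] fun x : ℕ => Real.log x := by
    refine .of_bound (Real.log k)⁻¹ (.of_forall fun x => ?_)
    rw [Real.norm_natCast, Real.norm_of_nonneg (Real.log_natCast_nonneg x), inv_mul_eq_div]
    exact Real.natLog_le_logb x k
  have hbase : (fun x : ℕ => ((Nat.log k x : ℝ) + 1 + 1) * (k + 1)) =O[atTop]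
      fun x : ℕ => Real.log x :=
    (((hnatLog.add hone).add hone).const_mul_left (k + 1 : ℝ)).congr_left fun x => mul_comm _ _
  exact isSparse_iff_isBigO.2
    ⟨_, (IsBigO.of_norm_le fun x => by simpa using hcount x).trans (hbase.pow _)⟩

end Recognizes

end Recognition

/-- For every `n`, the set `S` contains the Hilbert cube
`{P n + c * ∑ i < n, ε i * K ^ i | ε i ∈ {0, 1}}`; the list `bs` holds the choices `ε 0, ε 1, …`. -/
def ContainsHilbertCubes (S : Set ℕ) (K c : ℕ) (P : ℕ → ℕ) : Prop :=
  ∀ bs : List Bool, P bs.length + c * Nat.ofDigits K (bs.map Bool.toNat) ∈ S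

theorem Recognizes.exists_containsHilbertCubes {k : ℕ} {σ : Type*} {M : DFA (Fin k) σ} {S : Set ℕ}
    (hM : Recognizes M S) (hk : 2 ≤ k) (hfork : HasFork M) :
    ∃ (K c C : ℕ) (P : ℕ → ℕ), 2 ≤ K ∧ 0 < c ∧ (∀ n, P n ≤ C * K ^ n) ∧
      ContainsHilbertCubes S K c P := by
  obtain ⟨u, x, y, v, hne, hlen, hx, hy, hv⟩ := hfork
  wlog hlt : wordValue x < wordValue y generalizing x y
  · exact this y x hne.symm hlen.symm hy hx <| (Ne.lt_or_gt fun h =>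
      hne (eq_of_wordValue_eq hk hlen h)).resolve_left hlt
  have hxlen : x.length ≠ 0 := fun h => hne <|
    (List.length_eq_zero_iff.1 h).trans (List.length_eq_zero_iff.1 (hlen.symm.trans h)).symm
  set K := k ^ x.length
  have hK2 : 2 ≤ K := hk.trans (Nat.le_self_pow hxlen k)
  refine ⟨K, k ^ u.length * (wordValue y - wordValue x),
    wordValue u + k ^ u.length * (1 + wordValue v),
    fun n => wordValue u + k ^ u.length *
      (Nat.ofDigits K (List.replicate n (wordValue x)) + K ^ n * wordValue v),
    hK2, Nat.mul_pos (by positivity) (Nat.sub_pos_of_lt hlt), fun n => ?_, fun bs => ?_⟩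
  · have hrep : Nat.ofDigits K (List.replicate n (wordValue x)) ≤ K ^ n := by
      have hdigit : ∀ d ∈ List.replicate n (wordValue x), d < K := fun d hd => by
        rw [List.eq_of_mem_replicate hd]
        exact wordValue_lt hk x
      simpa only [List.length_replicate] using (Nat.ofDigits_lt_base_pow_length hK2 hdigit).le
    calc wordValue u + k ^ u.length *
          (Nat.ofDigits K (List.replicate n (wordValue x)) + K ^ n * wordValue v)
        ≤ wordValue u * K ^ n + k ^ u.length * (K ^ n + K ^ n * wordValue v) := by
          gcongr
          exact Nat.le_mul_of_pos_right _ (by positivity)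
      _ = (wordValue u + k ^ u.length * (1 + wordValue v)) * K ^ n := by ring
  · convert! hM.wordValue_mem (append_choiceWord_append_mem_accepts hx hy hv bs) using 1
    rw [List.append_assoc, wordValue_append, wordValue_append, length_choiceWord hlen,
      wordValue_choiceWord hlen hlt.le, pow_mul]
    ring

theorem sum_range_toNat_decide_lt {K d : ℕ} (hd : d ≤ K) :
    ∑ i ∈ Finset.range K, (decide (i < d)).toNat = d := by
  have hfilter : (Finset.range K).filter (· < d) = Finset.range d := by
    ext i
    simp only [Finset.mem_filter, Finset.mem_range]
    omega
  simp only [Bool.toNat, Bool.cond_decide]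
  rw [← Finset.card_filter, hfilter, Finset.card_range]

/- Layer decomposition: a digit `d ≤ D` is the number of `i < D` with `i < d`, so `D` numbers with
digits `0` and `1` add up, without carries, to any number with digits at most `D`. -/
theorem sum_ofDigits_threshold {K D : ℕ} {L : List ℕ} (hL : ∀ d ∈ L, d ≤ D) :
    ∑ i ∈ Finset.range D, Nat.ofDigits K (L.map fun d => (decide (i < d)).toNat) =
      Nat.ofDigits K L := by
  induction L with
  | nil => simp
  | cons d L ih =>
    rw [List.forall_mem_cons] at hL
    simp only [List.map_cons, Nat.ofDigits_cons, Finset.sum_add_distrib, ← Finset.mul_sum,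
      ih hL.2, sum_range_toNat_decide_lt hL.1]

theorem ContainsHilbertCubes.sumOfAtMost {S : Set ℕ} {K c : ℕ} {P : ℕ → ℕ}
    (hS : ContainsHilbertCubes S K c P) (hK : 2 ≤ K) {n m : ℕ} (hm : m < K ^ n) :
    SumOfAtMost S (K - 1) ((K - 1) * P n + c * m) := by
  obtain ⟨L, ⟨hlen, hdigits⟩, rfl⟩ := (Nat.bijOn_ofDigits hK n).surjOn hm
  have hmem : ∀ i ∈ Finset.range (K - 1),
      P n + c * Nat.ofDigits K (L.map fun d => (decide (i < d)).toNat) ∈ S := fun i _ => by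
    simpa only [List.length_map, hlen, List.map_map, Function.comp_def] using
      hS (L.map fun d => decide (i < d))
  have hsum := SumOfAtMost.finset_sum
    (Finset.nonempty_range_iff.2 (Nat.sub_ne_zero_of_lt hK)) hmem
  rwa [Finset.card_range, Finset.sum_add_distrib, ← Finset.mul_sum,
    sum_ofDigits_threshold fun d hd => Nat.le_sub_one_of_lt (hdigits d hd), Finset.sum_const,
    Finset.card_range, smul_eq_mul] at hsum

theorem sumOfAtMost_progression {S : Set ℕ} {R B c J : ℕ}
    (h : ∀ m ≤ J, SumOfAtMost S R (B + c * m)) (r : ℕ) :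
    ∀ m ≤ (r + 1) * J, SumOfAtMost S ((r + 1) * R) ((r + 1) * B + c * m) := by
  induction r with
  | zero => simpa only [zero_add, one_mul] using h
  | succ r ih =>
    intro m hm
    have hm' : m ≤ (r + 1) * J + J := by rwa [← Nat.succ_mul]
    obtain ⟨a, b, ha, hb, rfl⟩ : ∃ a b, a ≤ (r + 1) * J ∧ b ≤ J ∧ a + b = m :=
      ⟨m - min m J, min m J, by omega, by omega, by omega⟩
    convert (ih a ha).add (h b hb) using 1 <;> ring

/-- A set of natural numbers is syndetic if the gaps between its elements are eventually
bounded. -/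
def IsSyndetic (A : Set ℕ) : Prop :=
  ∃ c, ∀ᶠ N in atTop, ∃ s ∈ A, s ≤ N ∧ N < s + c

/- With `U = B + c * q`, the sums of `r + 1` elements fill the progression of difference `c` from
`(r + 1) * B` to `(r + 1) * U`. For `r = N / U` it ends beyond `N`; the lower bound on `N` gives
`C ≤ r`, hence `B ≤ r * (c * q)`, so that it also starts below `N`. -/
theorem exists_sumOfAtMost_near {S : Set ℕ} {R B c C q N : ℕ} (hc : 0 < c) (hq : 0 < q)
    (h : ∀ m ≤ q, SumOfAtMost S R (B + c * m)) (hB : B ≤ C * q) (hN : (C + c) ^ 2 * q ≤ N) :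
    ∃ s, SumOfAtMost S ((N / q + 1) * R) s ∧ s ≤ N ∧ N < s + c := by
  set U := B + c * q with hU
  have hqU : q ≤ U := (Nat.le_mul_of_pos_left q hc).trans (Nat.le_add_left _ _)
  set r := N / U with hr
  have hCr : C ≤ r := by
    rw [hr, Nat.le_div_iff_mul_le (hq.trans_le hqU)]
    calc C * U ≤ (C + c) * (C * q + c * q) :=
          Nat.mul_le_mul (Nat.le_add_right C c) (Nat.add_le_add_right hB _)
      _ = (C + c) ^ 2 * q := by ring
      _ ≤ N := hN
  have hstart : (r + 1) * B ≤ N :=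
    calc (r + 1) * B = r * B + B := by ring
      _ ≤ r * B + r * (c * q) := by
          gcongr
          exact hB.trans (Nat.mul_le_mul hCr (Nat.le_mul_of_pos_left q hc))
      _ = r * U := by ring
      _ ≤ N := Nat.div_mul_le_self N U
  have hend : N < (r + 1) * U := by
    simpa only [mul_comm] using Nat.lt_mul_div_succ N (hq.trans_le hqU)
  obtain ⟨Z, hZ⟩ := Nat.exists_eq_add_of_le hstart
  have hsteps : Z / c ≤ (r + 1) * q := by
    refine Nat.div_le_of_le_mul ?_
    rw [hU] at hend
    linarith
  refine ⟨(r + 1) * B + c * (Z / c), (sumOfAtMost_progression h r _ hsteps).mono ?_, ?_, ?_⟩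
  · exact Nat.mul_le_mul_right R (Nat.succ_le_succ (Nat.div_le_div_left hqU hq))
  · rw [hZ]
    exact Nat.add_le_add_left (Nat.mul_div_le Z c) _
  · have hZlt : Z < c * (Z / c + 1) := Nat.lt_mul_div_succ Z hc
    linarith

theorem exists_mul_pow_le_lt {K T N : ℕ} (hK : 2 ≤ K) (hT : 0 < T) (hTN : T ≤ N) :
    ∃ n, T * K ^ n ≤ N ∧ N < T * K ^ (n + 1) := by
  have hdiv : N / T ≠ 0 := (Nat.div_pos hTN hT).ne'
  refine ⟨Nat.log K (N / T), ?_, ?_⟩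
  · rw [mul_comm, ← Nat.le_div_iff_mul_le hT]
    exact Nat.pow_log_le_self K hdiv
  · rw [mul_comm, ← Nat.div_lt_iff_lt_mul hT]
    exact Nat.lt_pow_succ_log_self hK _

theorem ContainsHilbertCubes.exists_isSyndetic {S : Set ℕ} {K c C : ℕ} {P : ℕ → ℕ}
    (hS : ContainsHilbertCubes S K c P) (hK : 2 ≤ K) (hc : 0 < c) (hP : ∀ n, P n ≤ C * K ^ n) :
    ∃ R, IsSyndetic {s | SumOfAtMost S R s} := by
  set C' := (K - 1) * C * K
  set T := (C' + c) ^ 2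
  refine ⟨(T * K + 1) * (K - 1), c, eventually_atTop.2 ⟨T, fun N hN => ?_⟩⟩
  obtain ⟨n, hle, hlt⟩ := exists_mul_pow_le_lt hK (by positivity : 0 < T) hN
  have hpos : 0 < K ^ n := by positivity
  have hprog : ∀ m ≤ K ^ n, SumOfAtMost S (K - 1) ((K - 1) * P (n + 1) + c * m) := fun m hm =>
    hS.sumOfAtMost hK (hm.trans_lt (Nat.pow_lt_pow_succ hK))
  have hstart : (K - 1) * P (n + 1) ≤ C' * K ^ n :=
    calc (K - 1) * P (n + 1) ≤ (K - 1) * (C * K ^ (n + 1)) := Nat.mul_le_mul_left _ (hP _)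
      _ = C' * K ^ n := by ring
  obtain ⟨s, hs, hsN, hNs⟩ := exists_sumOfAtMost_near hc hpos hprog hstart hle
  have hcopies : N / K ^ n ≤ T * K := by
    refine (Nat.div_lt_of_lt_mul ?_).le
    rwa [pow_succ, ← mul_assoc, mul_right_comm, mul_comm] at hlt
  exact ⟨s, hs.mono (by gcongr), hsN, hNs⟩

theorem exists_uniform_sumOfAtMost {S : Set ℕ} {t : Finset ℕ}
    (h : ∀ n ∈ t, ∃ j, SumOfAtMost S j n) : ∃ j, ∀ n ∈ t, SumOfAtMost S j n := by
  choose! f hf using h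
  exact ⟨t.sup f, fun n hn => (hf n hn).mono (Finset.le_sup hn)⟩

theorem exists_eventually_sumOfAtMost_of_isSyndetic {S : Set ℕ} {R : ℕ} (hgcd : Nat.setGcd S = 1)
    (hS : IsSyndetic {s | SumOfAtMost S R s}) : ∃ j, ∀ᶠ n in atTop, SumOfAtMost S j n := by
  obtain ⟨c, hc⟩ := hS
  obtain ⟨N, hN⟩ := eventually_atTop.1 hc
  obtain ⟨L, hL⟩ := Nat.exists_mem_closure_of_ge S
  obtain ⟨j, hj⟩ : ∃ j, ∀ n ∈ Finset.Ico (L + 1) (L + 1 + c), SumOfAtMost S j n := by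
    refine exists_uniform_sumOfAtMost fun n hn => ?_
    rw [Finset.mem_Ico] at hn
    exact SumOfAtMost.exists_of_mem_closure (hL n (by omega) (hgcd ▸ one_dvd n)) (by omega)
  refine ⟨R + j, eventually_atTop.2 ⟨N + (L + 1), fun n hn => ?_⟩⟩
  obtain ⟨s, hs, hle, hlt⟩ := hN (n - (L + 1)) (by omega)
  have hrest : SumOfAtMost S j (n - s) := hj _ (Finset.mem_Ico.2 (by omega))
  simpa only [Nat.add_sub_cancel' (hle.trans (Nat.sub_le n _))] using
    SumOfAtMost.add hs hrest

end

/-- A `k`-automatic set `S` is an asymptotic additive basis for `ℕ` if and only if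
`S` is not sparse and `gcd(S) = 1`. -/
theorem automatic_asymptotic_additive_basis_iff
    (k : ℕ) (hk : 2 ≤ k) (S : Set ℕ) (hS : IsKAutomatic k S) :
    (∃ j M : ℕ, ∀ n : ℕ, M ≤ n → SumOfAtMost S j n) ↔
      (¬ IsSparse S ∧ ∀ d : ℕ, (∀ n ∈ S, d ∣ n) → d = 1) := by
  simp only [← ge_iff_le, ← Filter.eventually_atTop]
  constructor
  · rintro ⟨j, hj⟩
    exact ⟨fun hsparse => not_isSparse_of_eventually_mem hj (hsparse.sumOfAtMost j),
      fun d hd => eq_one_of_dvd_of_eventually_sumOfAtMost hd hj⟩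
  · rintro ⟨hsparse, hgcd⟩
    obtain ⟨m, M, hM : Recognizes M S⟩ := hS
    have hfork : HasFork M := of_not_not fun h => hsparse (hM.isSparse_of_not_hasFork hk h)
    obtain ⟨K, c, C, P, hK, hc, hP, hcubes⟩ := hM.exists_containsHilbertCubes hk hfork
    obtain ⟨R, hR⟩ := hcubes.exists_isSyndetic hK hc hP
    exact exists_eventually_sumOfAtMost_of_isSyndetic
      (hgcd _ fun n hn => Nat.setGcd_dvd_of_mem hn) hR
end

section
/- Let k ≥ 2 and m ≥ 2 be integers, and let S be the set of all natural numbers whose base-k expansion has exactly j digits for some j ≥ 0 with j ≡ −1 (mod m). Then for each natural number d ≥ 1, the number k^{md−2} − 1 cannot be expressed as a sum of fewer than k^{m−2} elements of S. -/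
/-- The set of natural numbers whose base-`k` expansion has exactly `j` digits for some
`j ≡ -1 (mod m)`, i.e. `m ∣ j + 1` where `j` is the number of base-`k` digits. -/
def DigitLengthSet (k m : ℕ) : Set ℕ :=
  {n : ℕ | m ∣ (Nat.digits k n).length + 1}

/-!
Below `k ^ (m * d - 2)` the largest digit count available in `DigitLengthSet k m` is
`m * (d - 1) - 1` (for `d = 1` there are no elements at all), so every summand of
`k ^ (m * d - 2) - 1` is at most `k ^ (m * (d - 1) - 1) - 1`. The target exceeds `k ^ (m - 1)`
times this bound, because `m * d - 2 = (m - 1) + (m * (d - 1) - 1)`; hence more than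
`k ^ (m - 1)` summands are needed.
-/

theorem mul_pred_lt_pred_mul {a b c : ℕ} (hab : a ≤ b) (hb : 1 < b) (hc : 0 < c) :
    a * (c - 1) < b * c - 1 := by
  have hbc : b ≤ b * c := Nat.le_mul_of_pos_right b hc
  calc
    a * (c - 1) ≤ b * (c - 1) := Nat.mul_le_mul_right _ hab
    _ = b * c - b := Nat.mul_sub_one b c
    _ < b * c - 1 := by omega

namespace DigitLengthSet

variable {k m n e x : ℕ}

theorem length_digits_lt_mul (hk : 1 < k) (hx : x ∈ DigitLengthSet k m)
    (hn : n + 1 < m * (e + 1)) (hxn : x < k ^ n) : (Nat.digits k x).length < m * e := by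
  obtain ⟨c, hc⟩ := hx
  have hlen : (Nat.digits k x).length ≤ n := (Nat.digits_length_le_iff hk x).2 hxn
  have hce : c < e + 1 := Nat.lt_of_mul_lt_mul_left (a := m) (by omega)
  calc
    (Nat.digits k x).length < m * c := by omega
    _ ≤ m * e := Nat.mul_le_mul_left m (Nat.lt_succ_iff.1 hce)

theorem lt_pow_mul_sub_one (hk : 1 < k) (hx : x ∈ DigitLengthSet k m)
    (hn : n + 1 < m * (e + 1)) (hxn : x < k ^ n) : x < k ^ (m * e - 1) :=
  (Nat.digits_length_le_iff hk x).1 <|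
    Nat.le_sub_one_of_lt (length_digits_lt_mul hk hx hn hxn)

theorem sum_le_length_mul {l : List ℕ} (hk : 1 < k) (hl : ∀ x ∈ l, x ∈ DigitLengthSet k m)
    (hn : n + 1 < m * (e + 1)) (hsum : l.sum < k ^ n) :
    l.sum ≤ l.length * (k ^ (m * e - 1) - 1) :=
  List.sum_le_card_nsmul l _ fun x hx =>
    Nat.le_sub_one_of_lt <|
      lt_pow_mul_sub_one hk (hl x hx) hn ((List.le_sum_of_mem hx).trans_lt hsum)

end DigitLengthSet

theorem digit_length_set_not_small_sum_general {k m d : ℕ} (hk : 2 ≤ k) (hm : 2 ≤ m) (hd : 1 ≤ d)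
    {l : List ℕ} (hne : l ≠ []) (hl : ∀ x ∈ l, x ∈ DigitLengthSet k m)
    (hsum : l.sum = k ^ (m * d - 2) - 1) : k ^ (m - 1) < l.length := by
  obtain ⟨e, rfl⟩ := Nat.exists_eq_add_of_le' hd
  have hsum_lt : l.sum < k ^ (m * (e + 1) - 2) := by
    rw [hsum]
    exact Nat.sub_one_lt_of_lt (Nat.pow_pos (by omega))
  have hn : m * (e + 1) - 2 + 1 < m * (e + 1) := by
    have : m ≤ m * (e + 1) := Nat.le_mul_of_pos_right m e.succ_pos
    omega
  have hme : 0 < m * e := by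
    obtain ⟨x, hx⟩ := List.exists_mem_of_ne_nil l hne
    have hx_lt : x < k ^ (m * (e + 1) - 2) := (List.le_sum_of_mem hx).trans_lt hsum_lt
    exact Nat.zero_lt_of_lt (DigitLengthSet.length_digits_lt_mul hk (hl x hx) hn hx_lt)
  have hexp : m * (e + 1) - 2 = (m - 1) + (m * e - 1) := by rw [Nat.mul_add_one]; omega
  by_contra! hlen
  refine (DigitLengthSet.sum_le_length_mul hk hl hn hsum_lt).not_gt ?_
  rw [hsum, hexp, pow_add]
  exact mul_pred_lt_pred_mul hlen (Nat.one_lt_pow (by omega) hk) (Nat.pow_pos (by omega))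

/-- For each `d ≥ 1`, the number `k^(md-2) - 1` cannot be expressed as a sum of fewer
than `k^(m-2)` elements of `DigitLengthSet k m`. -/
theorem digit_length_set_not_small_sum
    (k m : ℕ) (hk : 2 ≤ k) (hm : 2 ≤ m) :
    ∀ d : ℕ, 1 ≤ d →
      ¬ ∃ l : List ℕ, l ≠ [] ∧ l.length < k ^ (m - 2) ∧
          (∀ x ∈ l, x ∈ DigitLengthSet k m) ∧ l.sum = k ^ (m * d - 2) - 1 := by
  rintro d hd ⟨l, hne, hlen, hl, hsum⟩
  have hlong : k ^ (m - 1) < l.length :=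
    digit_length_set_not_small_sum_general hk hm hd hne hl hsum
  exact (hlen.trans_le (Nat.pow_le_pow_right (by omega) (by omega))).not_gt hlong
end

section
/- Let L be a regular language over a finite alphabet Σ. Then L has either polynomial growth or exponential growth: either there exists a constant c ≥ 0 such that g_L(n) = O(n^c), or there exists a real number α > 1 such that g_L(n) > α^n for infinitely many n. -/
/-- `g_L(n) = |L ∩ Σ^n|`, the number of words in `L` of length exactly `n`. -/
noncomputable def wordCount {α : Type} (L : Language α) (n : ℕ) : ℕ :=
  Set.ncard {w | w ∈ L ∧ w.length = n}

/-- `h_L(n) = |L ∩ Σ^{≤n}|`, the number of words in `L` of length at most `n`. -/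
noncomputable def wordCountLe {α : Type} (L : Language α) (n : ℕ) : ℕ :=
  Set.ncard {w | w ∈ L ∧ w.length ≤ n}

/-- `L` has polynomial growth: `g_L(n) = O(n^c)` for some constant `c`. -/
def PolyGrowth {α : Type} (L : Language α) : Prop :=
  ∃ c : ℕ, ∃ C : ℝ, 0 < C ∧ ∃ n0 : ℕ, ∀ n : ℕ, n0 ≤ n →
    (wordCount L n : ℝ) ≤ C * (n : ℝ) ^ c

/-- `L` has exponential growth: `g_L(n) > α^n` for some real `α > 1` and
infinitely many `n`. -/
def ExpGrowth {α : Type} (L : Language α) : Prop :=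
  ∃ a : ℝ, 1 < a ∧ ∀ N : ℕ, ∃ n : ℕ, N ≤ n ∧ a ^ n < (wordCount L n : ℝ)

/-!
Let `M` be a deterministic automaton for `L`. Suppose some state `q`, reachable from the start and
from which an accepting state can be reached, has two distinct loops of equal length `m`. These
can be concatenated freely, giving `2 ^ k` loops of length `m * k`, so `L` has exponential growth.
Otherwise every useful state has at most one loop of each length. Splitting a word at its last
visit to its initial state `q` writes it as a loop at `q` followed by a path that avoids `q`. By
induction on the set of available states, the number of words is then polynomially bounded.
-/

section WordCount

open scoped Computability

variable {α : Type}

theorem wordCount_mono [Finite α] {A B : Language α} (h : A ≤ B) (n : ℕ) :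
    wordCount A n ≤ wordCount B n :=
  Set.ncard_le_ncard (fun _ hw => ⟨h hw.1, hw.2⟩)
    ((List.finite_length_eq α n).subset fun _ hw => hw.2)

theorem one_le_wordCount_length [Finite α] {A : Language α} {w : List α} (hw : w ∈ A) :
    1 ≤ wordCount A w.length := by
  rw [wordCount, Nat.one_le_iff_ne_zero]
  exact Set.ncard_ne_zero_of_mem (a := w) ⟨hw, rfl⟩
    ((List.finite_length_eq α _).subset fun _ hv => hv.2)

theorem wordCount_zero_le_one (A : Language α) : wordCount A 0 ≤ 1 := by
  refine (Set.ncard_le_ncard ?_ (Set.finite_singleton [])).trans_eq (Set.ncard_singleton [])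
  exact fun w hw => List.length_eq_zero_iff.mp hw.2

theorem wordCount_singleton_le_one (u : List α) (n : ℕ) :
    wordCount ({u} : Language α) n ≤ 1 :=
  (Set.ncard_le_ncard (fun _ hw => hw.1) (Set.finite_singleton u)).trans_eq (Set.ncard_singleton u)

theorem wordCount_mul_wordCount_le [Finite α] (A B : Language α) (m n : ℕ) :
    wordCount A m * wordCount B n ≤ wordCount (A * B) (m + n) := by
  rw [wordCount, wordCount, ← Set.ncard_prod]
  refine Set.ncard_le_ncard_of_injOn (fun w => w.1 ++ w.2) ?_ ?_
    ((List.finite_length_eq α _).subset fun _ hw => hw.2)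
  · rintro ⟨v, w⟩ ⟨⟨hv, rfl⟩, hw, rfl⟩
    exact ⟨Language.append_mem_mul hv hw, List.length_append⟩
  · rintro ⟨v, w⟩ ⟨⟨-, hv⟩, -⟩ ⟨v', w'⟩ ⟨⟨-, hv'⟩, -⟩ h
    exact Prod.ext_iff.mpr (List.append_inj h (hv.trans hv'.symm))

theorem wordCount_le_wordCount_mul_mul [Finite α] {B C : Language α} {u v : List α} (hu : u ∈ B)
    (hv : v ∈ C) (A : Language α) (n : ℕ) :
    wordCount A n ≤ wordCount (B * A * C) (u.length + n + v.length) :=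
  calc wordCount A n
      ≤ wordCount B u.length * wordCount A n :=
        Nat.le_mul_of_pos_left _ (one_le_wordCount_length hu)
    _ ≤ wordCount (B * A) (u.length + n) := wordCount_mul_wordCount_le _ _ _ _
    _ ≤ wordCount (B * A) (u.length + n) * wordCount C v.length :=
        Nat.le_mul_of_pos_right _ (one_le_wordCount_length hv)
    _ ≤ wordCount (B * A * C) (u.length + n + v.length) := wordCount_mul_wordCount_le _ _ _ _

theorem wordCount_pow_le_wordCount_kstar [Finite α] (A : Language α) (m k : ℕ) :
    wordCount A m ^ k ≤ wordCount A∗ (m * k) := by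
  suffices wordCount A m ^ k ≤ wordCount (A ^ k) (m * k) from
    this.trans (wordCount_mono pow_le_kstar _)
  induction k with
  | zero => simpa using one_le_wordCount_length (Language.nil_mem_one (α := α))
  | succ k ih =>
    calc wordCount A m ^ (k + 1)
        = wordCount A m ^ k * wordCount A m := pow_succ _ _
      _ ≤ wordCount (A ^ k) (m * k) * wordCount A m := Nat.mul_le_mul_right _ ih
      _ ≤ wordCount (A ^ (k + 1)) (m * (k + 1)) := wordCount_mul_wordCount_le _ _ _ _

theorem wordCount_le_wordCountLe [Finite α] (A : Language α) (n : ℕ) :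
    wordCount A n ≤ wordCountLe A n :=
  Set.ncard_le_ncard (fun _ hw => ⟨hw.1, hw.2.le⟩)
    ((List.finite_length_le α n).subset fun _ hw => hw.2)

theorem wordCountLe_le_sum_wordCount (A : Language α) (n : ℕ) :
    wordCountLe A n ≤ ∑ i ∈ Finset.range (n + 1), wordCount A i := by
  have h_union : {w | w ∈ A ∧ w.length ≤ n} =
      ⋃ i ∈ Finset.range (n + 1), {w | w ∈ A ∧ w.length = i} := by
    ext w
    simp [and_comm]
  rw [wordCountLe, h_union]
  exact Finset.set_ncard_biUnion_le _ _

theorem wordCountLe_mono [Finite α] {A B : Language α} (h : A ≤ B) (n : ℕ) :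
    wordCountLe A n ≤ wordCountLe B n :=
  Set.ncard_le_ncard (fun _ hw => ⟨h hw.1, hw.2⟩)
    ((List.finite_length_le α n).subset fun _ hw => hw.2)

theorem wordCountLe_add_le (A B : Language α) (n : ℕ) :
    wordCountLe (A + B) n ≤ wordCountLe A n + wordCountLe B n := by
  have h_union : {w | w ∈ A + B ∧ w.length ≤ n} =
      {w | w ∈ A ∧ w.length ≤ n} ∪ {w | w ∈ B ∧ w.length ≤ n} := by
    ext w
    exact or_and_right
  rw [wordCountLe, h_union]
  exact Set.ncard_union_le _ _

theorem wordCountLe_iSup_le {ι : Type*} [Fintype ι] (A : ι → Language α) (n : ℕ) :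
    wordCountLe (⨆ i, A i) n ≤ ∑ i, wordCountLe (A i) n := by
  have h_union : {w | w ∈ ⨆ i, A i ∧ w.length ≤ n} = ⋃ i, {w | w ∈ A i ∧ w.length ≤ n} := by
    ext w
    simp [Language.mem_iSup]
  rw [wordCountLe, h_union]
  exact Set.ncard_iUnion_le_of_fintype _

theorem wordCountLe_mul_le [Finite α] (A B : Language α) (n : ℕ) :
    wordCountLe (A * B) n ≤ wordCountLe A n * wordCountLe B n := by
  let upTo (C : Language α) : Set (List α) := {w | w ∈ C ∧ w.length ≤ n}
  have h_finite (C : Language α) : (upTo C).Finite :=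
    (List.finite_length_le α n).subset fun _ hw => hw.2
  have h_subset : upTo (A * B) ⊆ (fun w => w.1 ++ w.2) '' (upTo A ×ˢ upTo B) := by
    rintro _ ⟨⟨v, hv, w, hw, rfl⟩, hn⟩
    rw [List.length_append] at hn
    exact ⟨(v, w), ⟨⟨hv, by lia⟩, hw, by lia⟩, rfl⟩
  have h_prod := (h_finite A).prod (h_finite B)
  calc wordCountLe (A * B) n
      ≤ (upTo A ×ˢ upTo B).ncard :=
        (Set.ncard_le_ncard h_subset (h_prod.image _)).trans (Set.ncard_image_le h_prod)
    _ = wordCountLe A n * wordCountLe B n := Set.ncard_prod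

end WordCount

section PolyBounded

open Polynomial

variable {α : Type} {A B : Language α}

/-- Polynomial growth in cumulative form: the number of words of length at most `n` is bounded by
a polynomial in `n`. Bounding by polynomials rather than by `C * n ^ c` makes the closure under
sums and products immediate. -/
def PolyBounded (A : Language α) : Prop :=
  ∃ p : ℕ[X], ∀ n, wordCountLe A n ≤ p.eval n

theorem polyBounded_of_wordCount_le {k : ℕ} (h : ∀ n, wordCount A n ≤ k) : PolyBounded A := by
  refine ⟨(X + 1) * (k : ℕ[X]), fun n => ?_⟩
  refine (wordCountLe_le_sum_wordCount A n).trans ?_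
  refine (Finset.sum_le_sum fun i _ => h i).trans_eq ?_
  simp

theorem polyBounded_singleton (u : List α) : PolyBounded ({u} : Language α) :=
  polyBounded_of_wordCount_le (wordCount_singleton_le_one u)

theorem PolyBounded.mono [Finite α] (h : A ≤ B) : PolyBounded B → PolyBounded A
  | ⟨p, hp⟩ => ⟨p, fun n => (wordCountLe_mono h n).trans (hp n)⟩

theorem PolyBounded.add : PolyBounded A → PolyBounded B → PolyBounded (A + B)
  | ⟨p, hp⟩, ⟨q, hq⟩ => ⟨p + q, fun n => by
      rw [eval_add]
      exact (wordCountLe_add_le A B n).trans (Nat.add_le_add (hp n) (hq n))⟩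

theorem PolyBounded.mul [Finite α] : PolyBounded A → PolyBounded B → PolyBounded (A * B)
  | ⟨p, hp⟩, ⟨q, hq⟩ => ⟨p * q, fun n => by
      rw [eval_mul]
      exact (wordCountLe_mul_le A B n).trans (Nat.mul_le_mul (hp n) (hq n))⟩

theorem PolyBounded.iSup {ι : Type*} [Finite ι] {A : ι → Language α}
    (h : ∀ i, PolyBounded (A i)) : PolyBounded (⨆ i, A i) := by
  have := Fintype.ofFinite ι
  choose p hp using h
  refine ⟨∑ i, p i, fun n => ?_⟩
  rw [eval_finsetSum]
  exact (wordCountLe_iSup_le A n).trans (Finset.sum_le_sum fun i _ => hp i n)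

theorem eval_le_eval_one_mul_pow_natDegree (p : ℕ[X]) {n : ℕ} (hn : 1 ≤ n) :
    p.eval n ≤ p.eval 1 * n ^ p.natDegree := by
  simp only [eval_eq_sum_range, one_pow, mul_one, Finset.sum_mul]
  gcongr with i hi
  exact Nat.lt_succ_iff.mp (Finset.mem_range.mp hi)

theorem PolyBounded.polyGrowth [Finite α] : PolyBounded A → PolyGrowth A := by
  rintro ⟨p, hp⟩
  refine ⟨p.natDegree, p.eval 1 + 1, by positivity, 1, fun n hn => ?_⟩
  have h_count : wordCount A n ≤ (p.eval 1 + 1) * n ^ p.natDegree :=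
    calc wordCount A n
        ≤ p.eval n := (wordCount_le_wordCountLe A n).trans (hp n)
      _ ≤ p.eval 1 * n ^ p.natDegree := eval_le_eval_one_mul_pow_natDegree p hn
      _ ≤ (p.eval 1 + 1) * n ^ p.natDegree := Nat.mul_le_mul_right _ (Nat.le_succ _)
  exact_mod_cast h_count

end PolyBounded

section ExpGrowth

open scoped Computability

variable {α : Type}

theorem expGrowth_of_pow_le_wordCount {L : Language α} {b : ℝ} {c m : ℕ} (hb : 1 < b) (hm : m ≠ 0)
    (h : ∀ k, b ^ k ≤ wordCount L (c + m * k)) : ExpGrowth L := by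
  -- Any base whose `(c + m)`-th power is less than `b` would do, as
  -- `c + m * k ≤ (c + m) * k` for `1 ≤ k`.
  set a : ℝ := b ^ ((c + m + 1 : ℕ) : ℝ)⁻¹
  have ha : 1 < a := Real.one_lt_rpow hb (by positivity)
  have ha_pow : a ^ (c + m + 1) = b := Real.rpow_inv_natCast_pow (by linarith) (by lia)
  refine ⟨a, ha, fun N => ⟨c + m * (N + 1), by nlinarith [Nat.pos_of_ne_zero hm], ?_⟩⟩
  calc a ^ (c + m * (N + 1))
      < a ^ ((c + m + 1) * (N + 1)) := pow_lt_pow_right₀ ha (by nlinarith)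
    _ = b ^ (N + 1) := by rw [pow_mul, ha_pow]
    _ ≤ wordCount L (c + m * (N + 1)) := h (N + 1)

theorem expGrowth_of_mul_kstar_mul_le [Finite α] {A B C L : Language α} {u v : List α} {m : ℕ}
    (hL : B * A∗ * C ≤ L) (hu : u ∈ B) (hv : v ∈ C) (hA : 1 < wordCount A m) : ExpGrowth L := by
  have hm : m ≠ 0 := by
    rintro rfl
    exact hA.not_ge (wordCount_zero_le_one A)
  have h_count (k : ℕ) : wordCount A m ^ k ≤ wordCount L (u.length + v.length + m * k) :=
    calc wordCount A m ^ k
        ≤ wordCount A∗ (m * k) := wordCount_pow_le_wordCount_kstar A m k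
      _ ≤ wordCount (B * A∗ * C) (u.length + m * k + v.length) :=
        wordCount_le_wordCount_mul_mul hu hv _ _
      _ ≤ wordCount L (u.length + m * k + v.length) := wordCount_mono hL _
      _ = wordCount L (u.length + v.length + m * k) := by rw [add_right_comm]
  exact expGrowth_of_pow_le_wordCount (b := wordCount A m) (mod_cast hA) hm
    fun k => mod_cast h_count k

end ExpGrowth

section Automaton

open scoped Computability

variable {α σ : Type*} (M : DFA α σ)

/-- The labels of the paths from the state `p` to the state `q`. -/
def wordsBetween (p q : σ) : Language α :=
  {w | M.evalFrom p w = q}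

/-- The labels of the paths starting at `q` all of whose states, both endpoints included, lie
in `S`. -/
def wordsWithin (S : Set σ) (q : σ) : Language α :=
  {w | ∀ p, p <+: w → M.evalFrom q p ∈ S}

/-- The states lying on some path from the start state to an accepting state. -/
def usefulStates : Set σ :=
  {q | (∃ u, u ∈ wordsBetween M M.start q) ∧ ∃ v, v ∈ M.acceptsFrom q}

theorem evalFrom_append_of_mem_wordsBetween {p q : σ} {x : List α} (hx : x ∈ wordsBetween M p q)
    (y : List α) : M.evalFrom p (x ++ y) = M.evalFrom q y :=
  (M.evalFrom_of_append p x y).trans (congrArg (M.evalFrom · y) hx)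

theorem wordsBetween_mul_wordsBetween_le (p q r : σ) :
    wordsBetween M p q * wordsBetween M q r ≤ wordsBetween M p r := by
  rintro _ ⟨x, hx, y, hy, rfl⟩
  exact (evalFrom_append_of_mem_wordsBetween M hx y).trans hy

theorem wordsBetween_mul_acceptsFrom_le (p q : σ) :
    wordsBetween M p q * M.acceptsFrom q ≤ M.acceptsFrom p := by
  intro w hw
  obtain ⟨x, hx, y, hy, rfl⟩ := Language.mem_mul.mp hw
  change M.evalFrom p (x ++ y) ∈ M.accept
  rwa [evalFrom_append_of_mem_wordsBetween M hx]

theorem wordsBetween_mul_kstar_mul_acceptsFrom_le_accepts (q : σ) :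
    wordsBetween M M.start q * (wordsBetween M q q)∗ * M.acceptsFrom q ≤ M.accepts :=
  calc wordsBetween M M.start q * (wordsBetween M q q)∗ * M.acceptsFrom q
      ≤ wordsBetween M M.start q * M.acceptsFrom q :=
        mul_le_mul_left (mul_kstar_le_self (wordsBetween_mul_wordsBetween_le M _ q q)) _
    _ ≤ M.accepts := wordsBetween_mul_acceptsFrom_le M M.start q

theorem accepts_le_wordsWithin_usefulStates :
    M.accepts ≤ wordsWithin M (usefulStates M) M.start := by
  rintro _ hw p ⟨t, rfl⟩
  refine ⟨⟨p, rfl⟩, t, ?_⟩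
  change M.evalFrom (M.evalFrom M.start p) t ∈ M.accept
  rwa [← M.evalFrom_of_append]

theorem exists_append_of_last_visit (q : σ) (w : List α) :
    ∃ x r, x ++ r = w ∧ x ∈ wordsBetween M q q ∧ ∀ p, p <+: r → p ≠ [] → M.evalFrom q p ≠ q := by
  induction w using List.reverseRecOn with
  | nil => exact ⟨[], [], rfl, rfl, fun p hp hne => absurd (List.prefix_nil.mp hp) hne⟩
  | append_singleton w a ih =>
    by_cases hwa : M.evalFrom q (w ++ [a]) = q
    · exact ⟨w ++ [a], [], List.append_nil _, hwa,
        fun p hp hne => absurd (List.prefix_nil.mp hp) hne⟩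
    · obtain ⟨x, r, rfl, hx, hr⟩ := ih
      refine ⟨x, r ++ [a], (List.append_assoc ..).symm, hx, fun p hp hne => ?_⟩
      rcases List.prefix_concat_iff.mp hp with rfl | hp
      · rwa [List.append_assoc, evalFrom_append_of_mem_wordsBetween M hx] at hwa
      · exact hr p hp hne

theorem wordsWithin_le_wordsBetween_self_mul (S : Set σ) (q : σ) :
    wordsWithin M S q ≤
      wordsBetween M q q * (1 + ⨆ a, {[a]} * wordsWithin M (S \ {q}) (M.step q a)) := by
  intro w hw
  obtain ⟨x, r, rfl, hx, hr⟩ := exists_append_of_last_visit M q w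
  refine Language.append_mem_mul hx ?_
  rcases r with _ | ⟨a, t⟩
  · exact Or.inl rfl
  refine Or.inr (Language.mem_iSup.mpr ⟨a, Language.append_mem_mul (Set.mem_singleton [a]) ?_⟩)
  intro p hp
  have h_prefix : a :: p <+: a :: t := (List.prefix_cons_inj a).mpr hp
  have h_mem := hw (x ++ a :: p) ((List.prefix_append_right_inj x).mpr h_prefix)
  rw [evalFrom_append_of_mem_wordsBetween M hx] at h_mem
  exact ⟨h_mem, hr (a :: p) h_prefix (List.cons_ne_nil a p)⟩

theorem wordsWithin_eq_zero_of_notMem {S : Set σ} {q : σ} (hq : q ∉ S) : wordsWithin M S q = 0 :=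
  Set.eq_empty_of_forall_notMem fun _ hw => hq (hw [] List.nil_prefix)

end Automaton

theorem polyBounded_wordsWithin {α : Type} {σ : Type*} [Finite α] (M : DFA α σ) {S : Set σ}
    (hS : S.Finite) (h : ∀ q ∈ S, PolyBounded (wordsBetween M q q)) (q : σ) :
    PolyBounded (wordsWithin M S q) := by
  classical
  lift S to Finset σ using hS
  induction S using Finset.strongInduction generalizing q with
  | H S ih =>
    by_cases hq : q ∈ S
    · have h_avoid (a : α) : PolyBounded (wordsWithin M (↑S \ {q}) (M.step q a)) := by
        rw [← Finset.coe_erase]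
        exact ih (S.erase q) (Finset.erase_ssubset hq) (M.step q a)
          fun s hs => h s (Finset.mem_of_mem_erase hs)
      have h_rest : PolyBounded (1 + ⨆ a, {[a]} * wordsWithin M (↑S \ {q}) (M.step q a)) :=
        (polyBounded_singleton []).add (.iSup fun a => (polyBounded_singleton [a]).mul (h_avoid a))
      exact ((h q hq).mul h_rest).mono (wordsWithin_le_wordsBetween_self_mul M S q)
    · rw [wordsWithin_eq_zero_of_notMem M hq]
      exact (polyBounded_singleton []).mono zero_le

/-- A regular language has either polynomial or exponential growth. -/
theorem regular_poly_or_exp_growth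
    {α : Type} [Fintype α] (L : Language α) (hL : L.IsRegular) :
    PolyGrowth L ∨ ExpGrowth L := by
  obtain ⟨σ, _, M, rfl⟩ := hL
  by_cases h : ∀ q ∈ usefulStates M, ∀ n, wordCount (wordsBetween M q q) n ≤ 1
  · left
    have h_within : PolyBounded (wordsWithin M (usefulStates M) M.start) :=
      polyBounded_wordsWithin M (Set.toFinite _)
        (fun q hq => polyBounded_of_wordCount_le (h q hq)) M.start
    exact (h_within.mono (accepts_le_wordsWithin_usefulStates M)).polyGrowth
  · right
    push Not at h
    obtain ⟨q, ⟨⟨u, hu⟩, v, hv⟩, m, hm⟩ := h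
    exact expGrowth_of_mul_kstar_mul_le
      (wordsBetween_mul_kstar_mul_acceptsFrom_le_accepts M q) hu hv hm
end

section
/- Let k ≥ 2 and t ≥ 1 be natural numbers and let u, y, z be words over the alphabet {0,1,…,k−1} with |y| = |z| = s, y ≠ z, and |u| = L. Then every real number γ ∈ [k^{L+s+1}, k^{L+s+1+t}] can be expressed as a sum of at most k^{2L+2s+t+1} elements of C(u;y,z). -/
/-- The value `0.w` in base `k` of a digit word `w = w₁⋯w_r`, i.e.
`Σ_{j=1}^{r} w_j k^{-j}`. -/
noncomputable def digitVal (k : ℕ) (w : List ℕ) : ℝ :=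
  ∑ j ∈ Finset.range w.length, (w.getD j 0 : ℝ) * ((k : ℝ)⁻¹) ^ (j + 1)

/-- `C(u; y, z)`: the set of real numbers whose base-`k` expansion has the form
`0.u w₁ w₂ w₃ ⋯` with each `wᵢ ∈ {y, z}` (where `|y| = |z|`). -/
noncomputable def CantorLike (k : ℕ) (u y z : List ℕ) : Set ℝ :=
  { x : ℝ | ∃ f : ℕ → List ℕ, (∀ i, f i = y ∨ f i = z) ∧
      x = digitVal k u +
        ((k : ℝ)⁻¹) ^ u.length * ∑' i : ℕ, ((k : ℝ)⁻¹) ^ (y.length * i) * digitVal k (f i) }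

/-!
Replacing `y` by `z` at the positions in `A ⊆ ℕ` of the expansion `0.u y y y ⋯` adds a fixed
multiple of `∑ i ∈ A, r ^ i`, where `r = k ^ (-s)`. A greedy expansion with digits in `{0, …, N}`
shows that every point of `[0, N / (1 - r)]` is a sum of `N` such subsums as soon as
`1 ≤ (N + 1) * r`. Hence, if `α = 0.u y y y ⋯` is smaller than `β = 0.u z z z ⋯`, then the sums of
exactly `N` elements of `C(u; y, z)` fill `[N α, N β]` for such `N`.
Since `0 ≤ α`, `β ≤ 1` and `k ^ (-(L + s)) ≤ β - α`, the number `N = ⌈γ / β⌉` satisfies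
`N α ≤ γ ≤ N β` whenever `k ^ (L + s) ≤ γ`, and it is at most `⌈γ * k ^ (L + s)⌉`.
-/

open Filter Set

-- Activating only this instance, instead of opening `Pointwise`, makes `N • S` unambiguously the
-- set of sums of `N` elements of `S`, and not the dilate of `S` by `N`.
attribute [local instance] Set.addMonoid

section Greedy

/-- The remainder map `x ↦ (x - d) / r` of the greedy expansion of real numbers in powers of `r`
with digits in `{0, …, N}`, where `d = min N ⌊x⌋₊` is the digit split off from `x`. -/
noncomputable def greedyStep (r : ℝ) (N : ℕ) (x : ℝ) : ℝ :=
  (x - (min N ⌊x⌋₊ : ℕ)) / r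

variable {r x : ℝ} {N : ℕ}

lemma mapsTo_greedyStep (hr0 : 0 < r) (hr1 : r < 1) (hN : 1 ≤ (N + 1) * r) :
    MapsTo (greedyStep r N) (Icc 0 (N / (1 - r))) (Icc 0 (N / (1 - r))) := by
  have hr : 0 < 1 - r := sub_pos.2 hr1
  rintro x ⟨hx0, hx⟩
  rw [le_div_iff₀ hr] at hx
  have hdigit : ((min N ⌊x⌋₊ : ℕ) : ℝ) ≤ x :=
    (Nat.cast_le.2 (min_le_right _ _)).trans (Nat.floor_le hx0)
  refine ⟨div_nonneg (sub_nonneg.2 hdigit) hr0.le, ?_⟩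
  rw [greedyStep, div_le_iff₀ hr0, div_mul_eq_mul_div, le_div_iff₀ hr]
  rcases le_total N ⌊x⌋₊ with h | h
  · rw [min_eq_left h]
    linarith
  · rw [min_eq_right h]
    calc (x - ⌊x⌋₊) * (1 - r) ≤ 1 * (1 - r) := by
          gcongr
          linarith [Nat.lt_floor_add_one x]
      _ ≤ N * r := by linarith

lemma hasSum_greedy (hr0 : 0 < r) (hr1 : r < 1) (hN : 1 ≤ (N + 1) * r)
    (hx : x ∈ Icc 0 (N / (1 - r))) :
    HasSum (fun i ↦ (min N ⌊(greedyStep r N)^[i] x⌋₊ : ℕ) * r ^ i) x := by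
  set rem : ℕ → ℝ := fun i ↦ (greedyStep r N)^[i] x
  have hrem (i : ℕ) : rem i ∈ Icc 0 (N / (1 - r)) :=
    (mapsTo_greedyStep hr0 hr1 hN).iterate i hx
  have hterm (i : ℕ) :
      (min N ⌊rem i⌋₊ : ℕ) * r ^ i = rem i * r ^ i - rem (i + 1) * r ^ (i + 1) := by
    have hsucc : rem (i + 1) = greedyStep r N (rem i) := Function.iterate_succ_apply' _ _ _
    rw [hsucc, greedyStep]
    field_simp
    ring
  have hlim : Tendsto (fun n ↦ rem n * r ^ n) atTop (nhds 0) :=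
    bdd_le_mul_tendsto_zero (.of_forall fun i ↦ (hrem i).1) (.of_forall fun i ↦ (hrem i).2)
      (tendsto_pow_atTop_nhds_zero_of_lt_one hr0.le hr1)
  have hzero : rem 0 * r ^ 0 = x := (mul_one _).trans (Function.iterate_zero_apply _ x)
  change HasSum (fun i ↦ (min N ⌊rem i⌋₊ : ℕ) * r ^ i) x
  rw [hasSum_iff_tendsto_nat_of_nonneg fun i ↦ by positivity]
  simp only [hterm, Finset.sum_range_sub', hzero]
  simpa only [sub_zero] using hlim.const_sub x

end Greedy

section GeomSubsums

/-- The set of all subsums `∑ i ∈ A, r ^ i`, `A ⊆ ℕ`, of the geometric series of ratio `r`. It is a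
Cantor set for `0 < r < 1 / 2`, and has junk elements when `1 ≤ |r|`, as the sum may diverge. -/
def geomSubsums (r : ℝ) : Set ℝ :=
  range fun A : Set ℕ ↦ ∑' i, A.indicator (r ^ ·) i

lemma summable_indicator_pow {r : ℝ} (hr0 : 0 ≤ r) (hr1 : r < 1) (A : Set ℕ) :
    Summable (A.indicator (r ^ ·)) :=
  (summable_geometric_of_lt_one hr0 hr1).indicator A

lemma Icc_subset_nsmul_geomSubsums {r : ℝ} {N : ℕ} (hr0 : 0 < r) (hr1 : r < 1)
    (hN : 1 ≤ (N + 1) * r) : Icc 0 (N / (1 - r)) ⊆ N • geomSubsums r := by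
  intro x hx
  set digit : ℕ → ℕ := fun i ↦ min N ⌊(greedyStep r N)^[i] x⌋₊
  let A (j : Fin N) : Set ℕ := {i | j < digit i}
  have hcount (i : ℕ) : ∑ j, (A j).indicator (r ^ ·) i = digit i * r ^ i := by
    have hcard : Finset.card {j : Fin N | j < digit i} = digit i := by
      simp [Fin.card_filter_val_lt, digit]
    simp [A, indicator_apply, Finset.sum_ite, hcard]
  have hsum := hasSum_sum (s := .univ) fun j _ ↦ (summable_indicator_pow hr0.le hr1 (A j)).hasSum
  simp only [hcount] at hsum
  exact mem_nsmul_iff_sum.2 ⟨_, fun j ↦ mem_range_self (A j),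
    hsum.unique (hasSum_greedy hr0 hr1 hN hx)⟩

end GeomSubsums

section Sumsets

lemma add_mul_mem_nsmul {R : Type*} [CommSemiring R] {S T : Set R} {a c x : R} {N : ℕ}
    (hST : ∀ e ∈ S, a + c * e ∈ T) (hx : x ∈ N • S) : N * a + c * x ∈ N • T := by
  obtain ⟨f, hf, rfl⟩ := mem_nsmul_iff_sum.1 hx
  refine mem_nsmul_iff_sum.2 ⟨fun i ↦ a + c * f i, fun i ↦ hST _ (hf i), ?_⟩
  simp [Finset.sum_add_distrib, Finset.mul_sum]

lemma exists_list_of_mem_nsmul {M : Type*} [AddMonoid M] {S : Set M} {x : M} {N : ℕ}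
    (hx : x ∈ N • S) : ∃ l : List M, l.length = N ∧ (∀ a ∈ l, a ∈ S) ∧ l.sum = x := by
  obtain ⟨f, rfl⟩ := mem_nsmul.1 hx
  exact ⟨_, List.length_ofFn, List.forall_mem_ofFn_iff.2 fun i ↦ (f i).2, rfl⟩

lemma mem_Icc_ceil_div_mul {K : Type*} [Field K] [LinearOrder K] [IsStrictOrderedRing K]
    [FloorSemiring K] {a b c : K} (hb : 0 < b) (hab : a < b) (hc : b ^ 2 ≤ c * (b - a)) :
    c ∈ Icc (⌈c / b⌉₊ * a) (⌈c / b⌉₊ * b) := by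
  have hgap : 0 < b - a := sub_pos.2 hab
  have hc0 : 0 < c := pos_of_mul_pos_left ((pow_pos hb 2).trans_le hc) hgap.le
  have hle : c / b ≤ ⌈c / b⌉₊ := Nat.le_ceil _
  have hlt : ⌈c / b⌉₊ * b < c + b := by
    have := Nat.ceil_lt_add_one (div_pos hc0 hb).le
    rwa [div_add_one hb.ne', lt_div_iff₀ hb] at this
  refine ⟨?_, (div_le_iff₀ hb).1 hle⟩
  have hstep : b ≤ ⌈c / b⌉₊ * (b - a) := by
    calc b ≤ c / b * (b - a) := by
          rw [div_mul_eq_mul_div, le_div_iff₀ hb, ← sq]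
          exact hc
      _ ≤ ⌈c / b⌉₊ * (b - a) := by gcongr
  linarith

end Sumsets

section DigitVal

variable {k : ℕ} {w y z : List ℕ}

lemma digitVal_nonneg (k : ℕ) (w : List ℕ) : 0 ≤ digitVal k w := by
  unfold digitVal
  positivity

lemma digitVal_cons (k d : ℕ) (w : List ℕ) :
    digitVal k (d :: w) = (d + digitVal k w) * (k : ℝ)⁻¹ := by
  simp only [digitVal, List.length_cons, Finset.sum_range_succ', List.getD_cons_succ,
    List.getD_cons_zero, zero_add, pow_one, pow_succ _ (_ + 1), ← mul_assoc, ← Finset.sum_mul]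
  rw [← add_mul, add_comm]

lemma digitVal_eq_ofDigits_mul (hk : k ≠ 0) (w : List ℕ) :
    digitVal k w = Nat.ofDigits k w.reverse * (k : ℝ)⁻¹ ^ w.length := by
  induction w with
  | nil => simp [digitVal]
  | cons d w ih =>
    rw [digitVal_cons, ih, Nat.ofDigits_reverse_cons, List.length_cons, Nat.cast_add, Nat.cast_mul,
      Nat.cast_pow]
    simp only [inv_pow]
    field_simp
    ring

lemma digitVal_le (hk : 1 < k) (hw : ∀ d ∈ w, d < k) :
    digitVal k w ≤ 1 - (k : ℝ)⁻¹ ^ w.length := by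
  have hlt : Nat.ofDigits k w.reverse + 1 ≤ k ^ w.length := by
    simpa using Nat.ofDigits_lt_base_pow_length (l := w.reverse) hk (by simpa using hw)
  rw [digitVal_eq_ofDigits_mul (by lia), le_sub_iff_add_le, inv_pow, ← add_one_mul]
  exact mul_inv_le_one_of_le₀ (by exact_mod_cast hlt) (by positivity)

lemma eq_of_digitVal_eq (hk : 1 < k) (hlen : y.length = z.length) (hy : ∀ d ∈ y, d < k)
    (hz : ∀ d ∈ z, d < k) (h : digitVal k y = digitVal k z) : y = z := by
  have hscale : (k : ℝ)⁻¹ ^ z.length ≠ 0 := by positivity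
  rw [digitVal_eq_ofDigits_mul (by lia), digitVal_eq_ofDigits_mul (by lia), hlen,
    mul_left_inj' hscale, Nat.cast_inj] at h
  exact List.reverse_injective <|
    Nat.ofDigits_inj_of_len_eq hk (by simpa) (by simpa using hy) (by simpa using hz) h

lemma inv_pow_le_digitVal_sub (hk : k ≠ 0) (hlen : y.length = z.length)
    (h : digitVal k y < digitVal k z) :
    (k : ℝ)⁻¹ ^ y.length ≤ digitVal k z - digitVal k y := by
  have hscale : 0 < (k : ℝ)⁻¹ ^ y.length := by positivity
  rw [digitVal_eq_ofDigits_mul hk, digitVal_eq_ofDigits_mul hk, ← hlen] at h ⊢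
  have hlt : Nat.ofDigits k y.reverse < Nat.ofDigits k z.reverse :=
    Nat.cast_lt.1 (lt_of_mul_lt_mul_right h hscale.le)
  rw [← sub_mul]
  exact le_mul_of_one_le_left hscale.le (le_sub_iff_add_le'.2 (by exact_mod_cast hlt))

lemma ne_nil_of_digitVal_lt (hlen : y.length = z.length) (h : digitVal k y < digitVal k z) :
    y ≠ [] := by
  rintro rfl
  rw [List.length_eq_zero_iff.1 hlen.symm] at h
  exact h.false

end DigitVal

section PeriodicVal

variable {k : ℕ} {u w y z : List ℕ}

/-- The value `0.u w w w ⋯` in base `k`, with the geometric series over the copies of `w` summed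
in closed form; it is the junk value `0.u` for empty `w`. -/
noncomputable def periodicVal (k : ℕ) (u w : List ℕ) : ℝ :=
  digitVal k u + (k : ℝ)⁻¹ ^ u.length * (digitVal k w / (1 - (k : ℝ)⁻¹ ^ w.length))

lemma inv_pow_length_lt_one (hk : 1 < k) (hw : w ≠ []) : (k : ℝ)⁻¹ ^ w.length < 1 :=
  pow_lt_one₀ (by positivity) (inv_lt_one_of_one_lt₀ (by exact_mod_cast hk)) (by simpa)

lemma periodicVal_nonneg (k : ℕ) (u w : List ℕ) : 0 ≤ periodicVal k u w := by
  have := digitVal_nonneg k u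
  have := digitVal_nonneg k w
  have : 0 ≤ 1 - (k : ℝ)⁻¹ ^ w.length :=
    sub_nonneg.2 <| pow_le_one₀ (by positivity) (Nat.cast_inv_le_one k)
  unfold periodicVal
  positivity

lemma periodicVal_le_one (hk : 1 < k) (hu : ∀ d ∈ u, d < k) (hw : ∀ d ∈ w, d < k) :
    periodicVal k u w ≤ 1 := by
  have hquot : digitVal k w / (1 - (k : ℝ)⁻¹ ^ w.length) ≤ 1 :=
    div_le_one_of_le₀ (digitVal_le hk hw) ((digitVal_nonneg k w).trans (digitVal_le hk hw))
  calc periodicVal k u w ≤ (1 - (k : ℝ)⁻¹ ^ u.length) + (k : ℝ)⁻¹ ^ u.length * 1 := by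
        unfold periodicVal
        gcongr
        exact digitVal_le hk hu
    _ = 1 := by ring

lemma periodicVal_sub_periodicVal (k : ℕ) (u : List ℕ) (hlen : y.length = z.length) :
    periodicVal k u z - periodicVal k u y =
      (k : ℝ)⁻¹ ^ u.length * (digitVal k z - digitVal k y) / (1 - (k : ℝ)⁻¹ ^ y.length) := by
  rw [periodicVal, periodicVal, hlen]
  ring

lemma inv_pow_le_periodicVal_sub (hk : 1 < k) (u : List ℕ) (hlen : y.length = z.length)
    (h : digitVal k y < digitVal k z) :
    (k : ℝ)⁻¹ ^ (u.length + y.length) ≤ periodicVal k u z - periodicVal k u y := by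
  have hr1 : 0 < 1 - (k : ℝ)⁻¹ ^ y.length :=
    sub_pos.2 (inv_pow_length_lt_one hk (ne_nil_of_digitVal_lt hlen h))
  rw [periodicVal_sub_periodicVal k u hlen, le_div_iff₀ hr1, pow_add]
  calc (k : ℝ)⁻¹ ^ u.length * (k : ℝ)⁻¹ ^ y.length * (1 - (k : ℝ)⁻¹ ^ y.length)
      ≤ (k : ℝ)⁻¹ ^ u.length * (k : ℝ)⁻¹ ^ y.length :=
        mul_le_of_le_one_right (by positivity) (sub_le_self _ (by positivity))
    _ ≤ (k : ℝ)⁻¹ ^ u.length * (digitVal k z - digitVal k y) := by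
        gcongr
        exact inv_pow_le_digitVal_sub (by lia) hlen h

end PeriodicVal

section CantorLike

variable {k : ℕ} {u y z : List ℕ} {γ : ℝ}

lemma cantorLike_comm (k : ℕ) (u : List ℕ) (hlen : y.length = z.length) :
    CantorLike k u y z = CantorLike k u z y := by
  simp only [CantorLike, hlen, or_comm]

lemma periodicVal_add_mem_cantorLike (hk : 1 < k) (u : List ℕ) (hy : y ≠ []) (z : List ℕ)
    {e : ℝ} (he : e ∈ geomSubsums ((k : ℝ)⁻¹ ^ y.length)) :
    periodicVal k u y + (k : ℝ)⁻¹ ^ u.length * (digitVal k z - digitVal k y) * e ∈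
      CantorLike k u y z := by
  classical
  obtain ⟨A, rfl⟩ := he
  have hr1 := inv_pow_length_lt_one hk hy
  set r : ℝ := (k : ℝ)⁻¹ ^ y.length with hr
  have hr0 : 0 ≤ r := by positivity
  refine ⟨fun i ↦ if i ∈ A then z else y, fun i ↦ by grind, ?_⟩
  have hterm (i : ℕ) : (k : ℝ)⁻¹ ^ (y.length * i) * digitVal k (if i ∈ A then z else y) =
      digitVal k y * r ^ i + (digitVal k z - digitVal k y) * A.indicator (r ^ ·) i := by
    rw [pow_mul, ← hr, indicator_apply]
    split_ifs <;> ring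
  have hsum := ((hasSum_geometric_of_lt_one hr0 hr1).mul_left (digitVal k y)).add
    ((summable_indicator_pow hr0 hr1 A).hasSum.mul_left (digitVal k z - digitVal k y))
  simp only [hterm, hsum.tsum_eq, periodicVal, ← hr]
  ring

lemma Icc_subset_nsmul_cantorLike (hk : 1 < k) (u : List ℕ) (hlen : y.length = z.length)
    (h : digitVal k y < digitVal k z) {N : ℕ} (hN : k ^ y.length ≤ N + 1) :
    Icc (N * periodicVal k u y) (N * periodicVal k u z) ⊆ N • CantorLike k u y z := by
  rintro γ ⟨hγ, hγ'⟩
  have hy := ne_nil_of_digitVal_lt hlen h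
  have hr1 := inv_pow_length_lt_one hk hy
  have hdiff := periodicVal_sub_periodicVal k u hlen
  set c : ℝ := (k : ℝ)⁻¹ ^ u.length * (digitVal k z - digitVal k y) with hc
  have hc0 : 0 < c := mul_pos (by positivity) (sub_pos.2 h)
  have hNr : 1 ≤ (N + 1) * (k : ℝ)⁻¹ ^ y.length := by
    rw [inv_pow, le_mul_inv_iff₀ (by positivity), one_mul]
    exact_mod_cast hN
  have hx : (γ - N * periodicVal k u y) / c ∈ Icc 0 (N / (1 - (k : ℝ)⁻¹ ^ y.length)) := by
    refine ⟨div_nonneg (sub_nonneg.2 hγ) hc0.le, ?_⟩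
    rw [div_le_iff₀ hc0, div_mul_eq_mul_div, mul_div_assoc, ← hdiff]
    linarith
  have hmem := add_mul_mem_nsmul (fun e ↦ periodicVal_add_mem_cantorLike hk u hy z)
    (Icc_subset_nsmul_geomSubsums (by positivity) hr1 hNr hx)
  rwa [← hc, mul_div_cancel₀ _ hc0.ne', add_sub_cancel] at hmem

lemma mem_ceil_nsmul_cantorLike (hk : 1 < k) (hu : ∀ d ∈ u, d < k) (hz : ∀ d ∈ z, d < k)
    (hlen : y.length = z.length) (h : digitVal k y < digitVal k z)
    (hγ : (k : ℝ) ^ (u.length + y.length) ≤ γ) :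
    γ ∈ ⌈γ / periodicVal k u z⌉₊ • CantorLike k u y z := by
  have hβ1 : periodicVal k u z ≤ 1 := periodicVal_le_one hk hu hz
  have hα0 : 0 ≤ periodicVal k u y := periodicVal_nonneg k u y
  have hgap : (k : ℝ)⁻¹ ^ (u.length + y.length) ≤ periodicVal k u z - periodicVal k u y :=
    inv_pow_le_periodicVal_sub hk u hlen h
  have hε : 0 < (k : ℝ)⁻¹ ^ (u.length + y.length) := by positivity
  have hγ0 : 0 ≤ γ := le_trans (by positivity) hγ
  have hβ0 : 0 < periodicVal k u z := by linarith
  apply Icc_subset_nsmul_cantorLike hk u hlen h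
  · have hN : (k : ℝ) ^ y.length ≤ ⌈γ / periodicVal k u z⌉₊ :=
      calc (k : ℝ) ^ y.length ≤ (k : ℝ) ^ (u.length + y.length) :=
            pow_le_pow_right₀ (by exact_mod_cast hk.le) (Nat.le_add_left _ _)
        _ ≤ γ := hγ
        _ ≤ γ / periodicVal k u z := le_div_self hγ0 hβ0 hβ1
        _ ≤ ⌈γ / periodicVal k u z⌉₊ := Nat.le_ceil _
    exact (Nat.cast_le.1 (by exact_mod_cast hN)).trans (Nat.le_succ _)
  · refine mem_Icc_ceil_div_mul hβ0 (by linarith) ?_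
    calc periodicVal k u z ^ 2 ≤ 1 := pow_le_one₀ hβ0.le hβ1
      _ = (k : ℝ) ^ (u.length + y.length) * (k : ℝ)⁻¹ ^ (u.length + y.length) := by
          rw [inv_pow, mul_inv_cancel₀ (by positivity)]
      _ ≤ γ * (periodicVal k u z - periodicVal k u y) := by gcongr

lemma ceil_div_periodicVal_le (hk : 1 < k) (hlen : y.length = z.length)
    (h : digitVal k y < digitVal k z) (hγ : 0 ≤ γ) :
    ⌈γ / periodicVal k u z⌉₊ ≤ ⌈γ * (k : ℝ) ^ (u.length + y.length)⌉₊ := by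
  have hβ : (k : ℝ)⁻¹ ^ (u.length + y.length) ≤ periodicVal k u z :=
    (inv_pow_le_periodicVal_sub hk u hlen h).trans (sub_le_self _ (periodicVal_nonneg k u y))
  rw [div_eq_mul_inv]
  gcongr
  exact inv_le_of_inv_le₀ (by positivity) (by rwa [← inv_pow])

end CantorLike

theorem cantorLike_interval_sum_general {k : ℕ} (hk : 2 ≤ k) {u y z : List ℕ}
    (hu : ∀ d ∈ u, d < k) (hy : ∀ d ∈ y, d < k) (hz : ∀ d ∈ z, d < k)
    (hlen : y.length = z.length) (hyz : y ≠ z) {γ : ℝ}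
    (hγ : (k : ℝ) ^ (u.length + y.length) ≤ γ) :
    ∃ l : List ℝ, l ≠ [] ∧ l.length ≤ ⌈γ * (k : ℝ) ^ (u.length + y.length)⌉₊ ∧
      (∀ x ∈ l, x ∈ CantorLike k u y z) ∧ l.sum = γ := by
  wlog h : digitVal k y < digitVal k z generalizing y z
  · have h' : digitVal k z < digitVal k y :=
      (not_lt.1 h).lt_of_ne fun he ↦ hyz (eq_of_digitVal_eq hk hlen hy hz he.symm)
    rw [hlen] at hγ ⊢
    rw [cantorLike_comm k u hlen]
    exact this hz hy hlen.symm hyz.symm hγ h'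
  have hγ0 : 0 < γ := lt_of_lt_of_le (by positivity) hγ
  obtain ⟨l, hl, hmem, hsum⟩ :=
    exists_list_of_mem_nsmul (mem_ceil_nsmul_cantorLike hk hu hz hlen h hγ)
  refine ⟨l, ?_, hl ▸ ceil_div_periodicVal_le hk hlen h hγ0.le, hmem, hsum⟩
  rintro rfl
  exact hγ0.ne hsum

/-- Every real `γ ∈ [k^(L+s+1), k^(L+s+1+t)]` is a sum of at most `k^(2L+2s+t+1)`
elements of `C(u; y, z)`. -/
theorem cantorLike_interval_sum
    (k t s L : ℕ) (hk : 2 ≤ k) (ht : 1 ≤ t)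
    (u y z : List ℕ)
    (hu : ∀ d ∈ u, d < k) (hy : ∀ d ∈ y, d < k) (hz : ∀ d ∈ z, d < k)
    (hys : y.length = s) (hzs : z.length = s) (hyz : y ≠ z) (huL : u.length = L) :
    ∀ γ : ℝ, γ ∈ Set.Icc ((k : ℝ) ^ (L + s + 1)) ((k : ℝ) ^ (L + s + 1 + t)) →
      ∃ l : List ℝ, l ≠ [] ∧ l.length ≤ k ^ (2 * L + 2 * s + t + 1) ∧
        (∀ x ∈ l, x ∈ CantorLike k u y z) ∧ l.sum = γ := by
  subst hys huL
  rintro γ ⟨hγ, hγ'⟩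
  obtain ⟨l, hne, hlen, hmem, hsum⟩ := cantorLike_interval_sum_general hk hu hy hz hzs.symm hyz
    ((pow_le_pow_right₀ (by exact_mod_cast Nat.one_le_of_lt hk) (Nat.le_succ _)).trans hγ)
  refine ⟨l, hne, hlen.trans (Nat.ceil_le.2 ?_), hmem, hsum⟩
  calc γ * (k : ℝ) ^ (u.length + y.length)
      ≤ (k : ℝ) ^ (u.length + y.length + 1 + t) * (k : ℝ) ^ (u.length + y.length) := by gcongr
    _ = (k ^ (2 * u.length + 2 * y.length + t + 1) : ℕ) := by
        push_cast
        ring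
end

section
/- Let k ≥ 2 be an integer and let y, z be words over {0,1,…,k−1} with |y| = |z| = s and y ≠ z. Write Y = Σ_{j=1}^{s} y_j k^{−j} and Z = Σ_{j=1}^{s} z_j k^{−j}, and suppose Y < Z. Let C = { Σ_{i≥0} k^{−si} V_i : each V_i ∈ {Y, Z} } ⊆ ℝ. Then for every integer m ≥ k^s − 1, the m-fold sumset C + C + ⋯ + C (m copies) equals the closed interval [mα, mβ], where α = (1 − k^{−s})^{−1} Y and β = (1 − k^{−s})^{−1} Z. -/
/-- The set `C = { Σ_{i≥0} k^{-si} V_i : each V_i ∈ {Y, Z} }` of reals whose base-`k`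
expansion is `0.w₁w₂w₃⋯` with each `wᵢ ∈ {y, z}`, where `Y, Z` are the values of
`0.y`, `0.z`. -/
noncomputable def CantorWords (k s : ℕ) (Y Z : ℝ) : Set ℝ :=
  { x : ℝ | ∃ g : ℕ → ℝ, (∀ i, g i = Y ∨ g i = Z) ∧
      x = ∑' i : ℕ, ((k : ℝ)⁻¹) ^ (s * i) * g i }


/-!
Forming sumsets commutes with taking digit sums: the `m`-fold sumset of the digit sums with digits
`D` consists of the digit sums with digits in the `m`-fold sumset of `D`. Writing the digits `Y`
and `Z` as `Y + 0 • (Z - Y)` and `Y + 1 • (Z - Y)` reduces the problem to `D = {0, 1}`, whose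
`m`-fold sumset is `{0, …, m}`. With ratio `q = k⁻ˢ` the condition `k ^ s - 1 ≤ m` says that the
`m + 1` translates `c + q • I`, `0 ≤ c ≤ m`, of the dilated interval `I = [0, m / (1 - q)]` have
no gaps between them, so they cover `I`, and a bounded set `A ⊆ D + q • A` consists of digit sums.
-/

section DigitSums

open Filter Set Topology
open scoped Pointwise

/-- The digit sums with ratio `q` and digits in `D`: the values `Σ_{i≥0} qⁱ dᵢ` of the summable
series with every `dᵢ ∈ D`. Using `HasSum` keeps the junk value of `tsum` out of this set. -/
def digitSums {E : Type*} [AddCommMonoid E] [Module ℝ E] [TopologicalSpace E]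
    (q : ℝ) (D : Set E) : Set E :=
  {x | ∃ d : ℕ → E, (∀ i, d i ∈ D) ∧ HasSum (fun i ↦ q ^ i • d i) x}

/-- A digit set `D` for which every digit series `Σ_{i≥0} qⁱ dᵢ` with `dᵢ ∈ D` is summable. It
stands in for boundedness in topological vector spaces without a norm or completeness. -/
def SummableDigits {E : Type*} [AddCommMonoid E] [Module ℝ E] [TopologicalSpace E]
    (q : ℝ) (D : Set E) : Prop :=
  ∀ ⦃d : ℕ → E⦄, (∀ i, d i ∈ D) → Summable fun i ↦ q ^ i • d i

theorem sum_range_pow_smul_sub_smul {R M : Type*} [Ring R] [AddCommGroup M] [Module R M]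
    (q : R) (a : ℕ → M) (n : ℕ) :
    ∑ i ∈ Finset.range n, q ^ i • (a i - q • a (i + 1)) = a 0 - q ^ n • a n := by
  simpa only [smul_sub, smul_smul, pow_succ, pow_zero, one_smul]
    using Finset.sum_range_sub' (fun i ↦ q ^ i • a i) n

section NormedSpace

variable {F : Type*} [NormedAddCommGroup F] [NormedSpace ℝ F] {q : ℝ} {D : Set F}

theorem summable_norm_pow_smul_of_isBounded (hq : |q| < 1) (hD : Bornology.IsBounded D)
    {d : ℕ → F} (hd : ∀ i, d i ∈ D) : Summable fun i ↦ ‖q ^ i • d i‖ := by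
  obtain ⟨R, hR⟩ := hD.exists_norm_le
  refine .of_nonneg_of_le (fun _ ↦ norm_nonneg _) (fun i ↦ ?_)
    ((summable_geometric_of_lt_one (abs_nonneg q) hq).mul_right R)
  rw [norm_smul, norm_pow, Real.norm_eq_abs]
  gcongr
  exact hR _ (hd i)

theorem SummableDigits.of_isBounded [CompleteSpace F] (hq : |q| < 1)
    (hD : Bornology.IsBounded D) : SummableDigits q D :=
  fun _ hd ↦ (summable_norm_pow_smul_of_isBounded hq hD hd).of_norm

theorem tendsto_pow_smul_zero_of_isBounded (hq : |q| < 1) (hD : Bornology.IsBounded D)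
    {d : ℕ → F} (hd : ∀ i, d i ∈ D) : Tendsto (fun i ↦ q ^ i • d i) atTop (𝓝 0) :=
  tendsto_zero_iff_norm_tendsto_zero.2
    (summable_norm_pow_smul_of_isBounded hq hD hd).tendsto_atTop_zero

/- Peeling off digits forever keeps the remainders in the bounded set `A`, so they are negligible
after multiplication by `qⁿ`. -/
theorem subset_digitSums_of_subset_add_smul (hq : |q| < 1) {A : Set F}
    (hA : Bornology.IsBounded A) (h : A ⊆ D + q • A) : A ⊆ digitSums q D := by
  have hstep : ∀ x : A, ∃ x' : A, (x : F) - q • (x' : F) ∈ D := by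
    rintro ⟨x, hx⟩
    obtain ⟨d, hd, _, ⟨x', hx', rfl⟩, rfl⟩ := h hx
    exact ⟨⟨x', hx'⟩, by simpa using hd⟩
  choose rem hrem using hstep
  intro x hx
  let a : ℕ → F := fun n ↦ (rem^[n] ⟨x, hx⟩ : A)
  have ha : ∀ n, a n ∈ A := fun n ↦ (rem^[n] ⟨x, hx⟩).2
  refine ⟨fun n ↦ a n - q • a (n + 1), fun n ↦ ?_, ?_⟩
  · simpa only [a, Function.iterate_succ_apply'] using hrem (rem^[n] ⟨x, hx⟩)
  · refine hasSum_of_subseq_of_summable (summable_norm_pow_smul_of_isBounded hq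
      (hA.sub (hA.smul₀ q)) fun n ↦ sub_mem_sub (ha n) (smul_mem_smul_set (ha (n + 1))))
      tendsto_finset_range ?_
    simpa only [sum_range_pow_smul_sub_smul, sub_zero, a, Function.iterate_zero, id_eq]
      using (tendsto_pow_smul_zero_of_isBounded hq hA ha).const_sub (a 0)

end NormedSpace

section TopologicalVectorSpace

variable {E : Type*} [AddCommGroup E] [Module ℝ E] [TopologicalSpace E] {q : ℝ}

theorem digitSums_add [IsTopologicalAddGroup E] {A B : Set E} (hA : SummableDigits q A) :
    digitSums q (A + B) = digitSums q A + digitSums q B := by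
  refine Subset.antisymm ?_ ?_
  · rintro x ⟨d, hd, hx⟩
    choose a ha b hb hab using hd
    have hsa := (hA ha).hasSum
    refine ⟨_, ⟨a, ha, hsa⟩, _, ⟨b, hb, ?_⟩, add_sub_cancel _ x⟩
    simpa only [← hab, smul_add, add_sub_cancel_left] using hx.sub hsa
  · rintro _ ⟨_, ⟨a, ha, hsa⟩, _, ⟨b, hb, hsb⟩, rfl⟩
    refine ⟨fun i ↦ a i + b i, fun i ↦ add_mem_add (ha i) (hb i), ?_⟩
    simpa only [smul_add] using hsa.add hsb

theorem summableDigits_singleton [ContinuousSMul ℝ E] (hq : |q| < 1) (v : E) :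
    SummableDigits q {v} := by
  intro d hd
  obtain rfl : d = fun _ ↦ v := funext hd
  exact (summable_geometric_of_abs_lt_one hq).smul_const v

theorem digitSums_singleton [ContinuousSMul ℝ E] [T2Space E] (hq : |q| < 1) (v : E) :
    digitSums q {v} = {(1 - q)⁻¹ • v} := by
  have hv : HasSum (fun i ↦ q ^ i • v) ((1 - q)⁻¹ • v) :=
    (hasSum_geometric_of_abs_lt_one hq).smul_const v
  refine Subset.antisymm ?_ (singleton_subset_iff.2 ⟨fun _ ↦ v, fun _ ↦ rfl, hv⟩)
  rintro x ⟨d, hd, hx⟩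
  obtain rfl : d = fun _ ↦ v := funext hd
  exact hx.unique hv

/- Here and below `m • S` with `m : ℕ` and `S` a set is the `m`-fold sumset (`Set.NSMul`), whereas
`q • A` with `q : ℝ` is a dilate. -/
theorem nsmul_digitSums [IsTopologicalAddGroup E] [ContinuousSMul ℝ E] [T2Space E] (hq : |q| < 1)
    {D : Set E} (hD : SummableDigits q D) (m : ℕ) :
    m • digitSums q D = digitSums q (m • D) := by
  induction m with
  | zero => simp only [zero_nsmul, ← singleton_zero, digitSums_singleton hq, smul_zero]
  | succ m ih => rw [succ_nsmul', succ_nsmul', ih, digitSums_add hD]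

theorem digitSums_image {F : Type*} [AddCommGroup F] [Module ℝ F] [TopologicalSpace F]
    [T2Space E] (L : F →L[ℝ] E) {D : Set F} (hD : SummableDigits q D) :
    digitSums q (L '' D) = L '' digitSums q D := by
  refine Subset.antisymm ?_ ?_
  · rintro x ⟨d, hd, hx⟩
    choose c hc hcd using hd
    have hsc := (hD hc).hasSum
    refine ⟨_, ⟨c, hc, hsc⟩, (hsc.mapL L).unique ?_⟩
    simpa only [map_smul, hcd] using hx
  · rintro _ ⟨x, ⟨c, hc, hx⟩, rfl⟩
    refine ⟨fun i ↦ L (c i), fun i ↦ mem_image_of_mem L (hc i), ?_⟩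
    simpa only [map_smul] using hx.mapL L

end TopologicalVectorSpace

section Interval

variable {q : ℝ} {m : ℕ}

theorem digitSums_subset_Icc (hq0 : 0 ≤ q) (hq1 : q < 1) {a b : ℝ} {D : Set ℝ} (hD : D ⊆ Icc a b) :
    digitSums q D ⊆ Icc ((1 - q)⁻¹ * a) ((1 - q)⁻¹ * b) := by
  rintro x ⟨d, hd, hx⟩
  have geom (c : ℝ) : HasSum (fun i ↦ q ^ i • c) ((1 - q)⁻¹ * c) :=
    (hasSum_geometric_of_lt_one hq0 hq1).mul_right c
  refine ⟨hasSum_le (fun i ↦ ?_) (geom a) hx, hasSum_le (fun i ↦ ?_) hx (geom b)⟩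
  · exact smul_le_smul_of_nonneg_left (hD (hd i)).1 (pow_nonneg hq0 i)
  · exact smul_le_smul_of_nonneg_left (hD (hd i)).2 (pow_nonneg hq0 i)

theorem Icc_subset_natCast_image_Iic_add_smul (hq0 : 0 < q) (hq1 : q < 1) (hm : q⁻¹ ≤ m + 1) :
    Icc 0 ((1 - q)⁻¹ * m) ⊆ (Nat.cast '' Iic m : Set ℝ) + q • Icc 0 ((1 - q)⁻¹ * m) := by
  rintro t ⟨ht0, htM⟩
  set M := (1 - q)⁻¹ * (m : ℝ)
  have hq : 0 < 1 - q := sub_pos.2 hq1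
  have hM : M - m = q * M := by
    have : (1 - q) * M = m := mul_inv_cancel_left₀ hq.ne' _
    linarith
  have hqM : 1 ≤ q * M := by
    have hqm : 1 - q ≤ q * m := by linarith [(inv_le_iff_one_le_mul₀ hq0).1 hm]
    calc 1 = (1 - q)⁻¹ * (1 - q) := (inv_mul_cancel₀ hq.ne').symm
      _ ≤ (1 - q)⁻¹ * (q * m) := by gcongr
      _ = q * M := mul_left_comm ..
  suffices ∃ c ≤ m, (c : ℝ) ≤ t ∧ t - c ≤ q * M by
    obtain ⟨c, hcm, hct, htc⟩ := this
    refine ⟨c, mem_image_of_mem _ hcm, t - c, ⟨(t - c) / q, ⟨?_, ?_⟩, ?_⟩, add_sub_cancel _ t⟩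
    · exact div_nonneg (sub_nonneg.2 hct) hq0.le
    · exact (div_le_iff₀' hq0).2 htc
    · exact mul_div_cancel₀ _ hq0.ne'
  -- The greedy digit `min m ⌊t⌋₊` works: `M - m = q * M`, and a fractional part is at most `q * M`.
  rcases le_total m ⌊t⌋₊ with h | h
  · exact ⟨m, le_rfl, (Nat.le_floor_iff ht0).1 h, by linarith⟩
  · exact ⟨⌊t⌋₊, h, Nat.floor_le ht0, by linarith [Nat.lt_floor_add_one t]⟩

theorem digitSums_natCast_image_Iic (hq0 : 0 < q) (hq1 : q < 1) (hm : q⁻¹ ≤ m + 1) :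
    digitSums q (Nat.cast '' Iic m) = Icc 0 ((1 - q)⁻¹ * m) := by
  refine Subset.antisymm ?_ ?_
  · have hD : (Nat.cast '' Iic m : Set ℝ) ⊆ Icc 0 m := by
      rintro _ ⟨c, hc, rfl⟩
      exact ⟨c.cast_nonneg, Nat.cast_le.2 hc⟩
    simpa only [mul_zero] using digitSums_subset_Icc hq0.le hq1 hD
  · exact subset_digitSums_of_subset_add_smul (abs_lt.2 ⟨by linarith, hq1⟩)
      (Metric.isBounded_Icc _ _) (Icc_subset_natCast_image_Iic_add_smul hq0 hq1 hm)

theorem nsmul_zero_one_eq_Iic (m : ℕ) : m • ({0, 1} : Set ℕ) = Iic m := by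
  induction m with
  | zero => ext; simp
  | succ m ih =>
    ext n
    simp only [succ_nsmul, ih, Set.mem_add, mem_Iic, mem_insert_iff, mem_singleton_iff,
      exists_eq_or_imp, exists_eq_left]
    constructor
    · rintro ⟨c, hc, hn⟩
      omega
    · intro hn
      exact ⟨min n m, min_le_right n m, by omega⟩

theorem nsmul_zero_one_eq_natCast_image_Iic {R : Type*} [AddMonoidWithOne R] (m : ℕ) :
    m • ({0, 1} : Set R) = Nat.cast '' Iic m := by
  have h := image_nsmul (Nat.castAddMonoidHom R) {0, 1} m
  rw [nsmul_zero_one_eq_Iic, image_pair] at h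
  simpa using h.symm

theorem nsmul_digitSums_zero_one (hq0 : 0 < q) (hq1 : q < 1) (hm : q⁻¹ ≤ m + 1) :
    m • digitSums q ({0, 1} : Set ℝ) = Icc 0 ((1 - q)⁻¹ * m) := by
  have hq : |q| < 1 := abs_lt.2 ⟨by linarith, hq1⟩
  rw [nsmul_digitSums hq (.of_isBounded hq (toFinite _).isBounded),
    nsmul_zero_one_eq_natCast_image_Iic, digitSums_natCast_image_Iic hq0 hq1 hm]

end Interval

section TwoPoints

variable {E : Type*} [AddCommGroup E] [Module ℝ E] [TopologicalSpace E]
  [IsTopologicalAddGroup E] [ContinuousSMul ℝ E] [T2Space E] {q : ℝ}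

theorem digitSums_pair (hq : |q| < 1) (Y Z : E) :
    digitSums q {Y, Z} = {(1 - q)⁻¹ • Y} +
      ContinuousLinearMap.toSpanSingleton ℝ (Z - Y) '' digitSums q {0, 1} := by
  have hYZ : ({Y, Z} : Set E) =
      {Y} + ContinuousLinearMap.toSpanSingleton ℝ (Z - Y) '' {0, 1} := by
    simp [image_pair]
  rw [hYZ, digitSums_add (summableDigits_singleton hq Y), digitSums_singleton hq,
    digitSums_image _ (.of_isBounded hq (toFinite _).isBounded)]

theorem cantorWords_sumset_eq_interval_general (hq0 : 0 < q) (hq1 : q < 1) {m : ℕ}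
    (hm : q⁻¹ ≤ m + 1) (Y Z : E) :
    m • digitSums q {Y, Z} = segment ℝ (m • (1 - q)⁻¹ • Y) (m • (1 - q)⁻¹ • Z) := by
  have hM : 0 ≤ (1 - q)⁻¹ * m := mul_nonneg (inv_nonneg.2 (sub_nonneg.2 hq1.le)) m.cast_nonneg
  set L := ContinuousLinearMap.toSpanSingleton ℝ (Z - Y)
  have hL : L '' segment ℝ 0 ((1 - q)⁻¹ * m) = segment ℝ (L 0) (L ((1 - q)⁻¹ * m)) :=
    image_segment ℝ L.toLinearMap.toAffineMap 0 _
  rw [digitSums_pair (abs_lt.2 ⟨by linarith, hq1⟩), nsmul_add, nsmul_singleton, ← image_nsmul,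
    nsmul_digitSums_zero_one hq0 hq1 hm, ← segment_eq_Icc hM, hL, singleton_add,
    segment_translate_image, map_zero, add_zero, ContinuousLinearMap.toSpanSingleton_apply]
  congr 1
  module

end TwoPoints

theorem setOf_exists_sum_eq_nsmul {M : Type*} [AddCommMonoid M] (S : Set M) (m : ℕ) :
    {x | ∃ f : Fin m → M, (∀ i, f i ∈ S) ∧ x = ∑ i, f i} = m • S := by
  ext x
  simpa [eq_comm] using (mem_fintype_sum (fun _ : Fin m ↦ S) x).symm

theorem inv_natCast_pow_lt_one {k s : ℕ} (hk : 2 ≤ k) (hs : s ≠ 0) : (k : ℝ)⁻¹ ^ s < 1 :=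
  pow_lt_one₀ (by positivity) (inv_lt_one_of_one_lt₀ (Nat.one_lt_cast.2 hk)) hs

theorem cantorWords_eq_digitSums {k s : ℕ} (hq : (k : ℝ)⁻¹ ^ s < 1) (Y Z : ℝ) :
    CantorWords k s Y Z = digitSums ((k : ℝ)⁻¹ ^ s) {Y, Z} := by
  have hD : SummableDigits ((k : ℝ)⁻¹ ^ s) {Y, Z} := .of_isBounded
    (by rwa [abs_of_nonneg (by positivity)]) (toFinite _).isBounded
  ext x
  simp only [CantorWords, pow_mul]
  constructor
  · rintro ⟨d, hd, rfl⟩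
    exact ⟨d, hd, (hD hd).hasSum⟩
  · rintro ⟨d, hd, hx⟩
    exact ⟨d, hd, hx.tsum_eq.symm⟩

end DigitSums

/-- For `m ≥ k^s - 1`, the `m`-fold sumset of `C` equals the closed interval
`[mα, mβ]`, where `α = (1 - k^{-s})⁻¹ Y` and `β = (1 - k^{-s})⁻¹ Z`. -/
theorem cantorWords_sumset_eq_interval
    (k s : ℕ) (hk : 2 ≤ k) (y z : List ℕ)
    (hy : ∀ d ∈ y, d < k) (hz : ∀ d ∈ z, d < k)
    (hys : y.length = s) (hzs : z.length = s) (hyz : y ≠ z)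
    (hYZ : digitVal k y < digitVal k z) :
    ∀ m : ℕ, k ^ s - 1 ≤ m →
      { x : ℝ | ∃ f : Fin m → ℝ,
          (∀ i, f i ∈ CantorWords k s (digitVal k y) (digitVal k z)) ∧ x = ∑ i, f i }
        = Set.Icc ((m : ℝ) * ((1 - ((k : ℝ)⁻¹) ^ s)⁻¹ * digitVal k y))
            ((m : ℝ) * ((1 - ((k : ℝ)⁻¹) ^ s)⁻¹ * digitVal k z)) := by
  intro m hm
  have hs : s ≠ 0 := fun hs ↦ hyz <|
    (List.length_eq_zero_iff.1 (hys.trans hs)).trans (List.length_eq_zero_iff.1 (hzs.trans hs)).symm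
  have hq0 : 0 < (k : ℝ)⁻¹ ^ s := by positivity
  have hq1 := inv_natCast_pow_lt_one hk hs
  have hqm : ((k : ℝ)⁻¹ ^ s)⁻¹ ≤ m + 1 := by
    simpa only [inv_pow, inv_inv] using mod_cast tsub_le_iff_right.1 hm
  have hα : 0 ≤ (1 - (k : ℝ)⁻¹ ^ s)⁻¹ := inv_nonneg.2 (sub_nonneg.2 hq1.le)
  have hle := nsmul_le_nsmul_right (smul_le_smul_of_nonneg_left hYZ.le hα) m
  rw [setOf_exists_sum_eq_nsmul, cantorWords_eq_digitSums hq1,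
    cantorWords_sumset_eq_interval_general hq0 hq1 hqm, segment_eq_Icc hle]
  simp only [nsmul_eq_mul, smul_eq_mul]
end
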